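/- arXiv:2507.16677 — 3 statements merged into one kernel-verified Lean document; each statement's English description precedes it below -/
import Mathlib

section
/- For all δ, K ≥ 0 there is a constant D = D(δ,K) with the following property. Let X be a δ-hyperbolic graph, let 𝒴 be a family of K-quasiconvex subsets of X, and let X̂ be the cone-off of X with respect to 𝒴. Let x, y, w be vertices of X, let [x,y] be a geodesic in X from x to y, and let γ be a geodesic in X̂ from x to y. For any t ≥ 0, if d_X(w,[x,y]) ≤ t, then d_{X̂}(w,γ) ≤ t + D + K + 1. -/
/-!
The proof adapts the classical argument for stability of quasi-geodesics, measuring distances in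
the cone-off `X̂`.

*Logarithmic estimate* (`log_estimate`).  Let `q` be a path in `X̂` between vertices `a`, `b` of
`X`, of length at most `2 ^ k + 1`, and let `[a, b]` be a geodesic of `X`.  Halving `q` repeatedly
and applying slimness of triangles in `X` at every step, each point of `[a, b]` is found to be
within `k * δ` of a geodesic of `X` joining two vertices of `q` at most two steps apart along `q`.
By quasiconvexity that geodesic lies within `K + 2` of `q` in `X̂`.

*Bootstrapping.*  Let `v₀` be a vertex of `[x, y]` whose `X̂`-distance `M` to the `X̂`-geodesic `γ`
is maximal.  On each side of `v₀` choose a vertex of `[x, y]` at `X̂`-distance `2 * M` from `v₀`, or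
the endpoint of `[x, y]` if there is none, and join the chosen vertices to `γ` by shortest paths of
`X̂`, of length at most `M`.  With a subpath of `γ` they form a path of length at most `8 * M`
that stays at distance at least `M` from `v₀`.  The logarithmic estimate then gives
`M ≤ δ * O(log M) + K + 2`, which bounds `M` in terms of `δ` and `K`.
-/

open scoped ENNReal

/-- `G` is `δ`-hyperbolic: every geodesic triangle is `δ`-slim, i.e. (the support of) each
geodesic side lies in the closed `δ`-neighborhood of the union of the other two sides. -/
def SlimTrianglesG {V : Type*} (G : SimpleGraph V) (δ : ℝ) : Prop :=
  ∀ ⦃x y z : V⦄ (p : G.Walk x y) (q : G.Walk x z) (r : G.Walk z y),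
    p.length = G.dist x y → q.length = G.dist x z → r.length = G.dist z y →
    ∀ v ∈ p.support, ∃ w, (w ∈ q.support ∨ w ∈ r.support) ∧ (G.dist v w : ℝ) ≤ δ

/-- `Y` is `K`-quasiconvex in `G`: every geodesic with endpoints in `Y` is contained in
the closed `K`-neighborhood of `Y`. -/
def QuasiconvexIn {V : Type*} (G : SimpleGraph V) (K : ℝ) (Y : Set V) : Prop :=
  ∀ ⦃x⦄, x ∈ Y → ∀ ⦃y⦄, y ∈ Y → ∀ w : G.Walk x y, w.length = G.dist x y →
    ∀ v ∈ w.support, ∃ u ∈ Y, (G.dist v u : ℝ) ≤ K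

/-- The closed `r`-neighborhood of a set `A` of vertices. -/
def nbhd {V : Type*} (G : SimpleGraph V) (r : ℝ) (A : Set V) : Set V :=
  {v | ∃ a ∈ A, (G.dist v a : ℝ) ≤ r}

/-- The nearest-point projection of the vertex `z` to the set `Y`:
`π_Y(z) = {y ∈ Y | dist(z,y) = dist(z,Y)}`. -/
def projSet {V : Type*} (G : SimpleGraph V) (Y : Set V) (z : V) : Set V :=
  {y ∈ Y | ∀ y' ∈ Y, G.dist z y ≤ G.dist z y'}

/-- The nearest-point projection of a set `A` to `Y`: `π_Y(A) = ⋃_{a ∈ A} π_Y(a)`. -/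
def projSetOf {V : Type*} (G : SimpleGraph V) (Y A : Set V) : Set V :=
  ⋃ a ∈ A, projSet G Y a

/-- The diameter (in `ℝ≥0∞`) of a set of vertices of `G`. -/
noncomputable def gdiam {V : Type*} (G : SimpleGraph V) (S : Set V) : ℝ≥0∞ :=
  ⨆ a ∈ S, ⨆ b ∈ S, (G.dist a b : ℝ≥0∞)

/-- `d_Y^π(A,B) = diam(π_Y(A) ∪ π_Y(B))`. -/
noncomputable def projDiam {V : Type*} (G : SimpleGraph V) (Y A B : Set V) : ℝ≥0∞ :=
  gdiam G (projSetOf G Y A ∪ projSetOf G Y B)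

/-- The cone-off of `G` with respect to the family `𝒴`: for each `Y ∈ 𝒴` add a cone
vertex `v_Y` (here `Sum.inr ⟨Y,_⟩`), joined by an edge to each vertex of `Y`; the original
graph `G` is kept on the `Sum.inl` vertices. -/
def coneOff {V : Type*} (G : SimpleGraph V) (𝒴 : Set (Set V)) :
    SimpleGraph (V ⊕ ↥𝒴) :=
  SimpleGraph.fromRel fun a b =>
    match a, b with
    | Sum.inl x, Sum.inl y => G.Adj x y
    | Sum.inl x, Sum.inr Y => x ∈ (Y : Set V)
    | Sum.inr _, _ => False

universe u

namespace ConeOffAux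

open SimpleGraph

/-! ### Walks and geodesics in graphs -/

section General

variable {V : Type*} {G : SimpleGraph V}

lemma dist_tri {a b c : V} (h₁ : G.Reachable a b) (h₂ : G.Reachable b c) :
    G.dist a c ≤ G.dist a b + G.dist b c := by
  obtain ⟨p, hp⟩ := h₁.exists_walk_length_eq_dist
  obtain ⟨q, hq⟩ := h₂.exists_walk_length_eq_dist
  have := dist_le (p.append q)
  rw [Walk.length_append] at this
  omega

lemma append_split {u v z : V} (p : G.Walk u v) (h : z ∈ p.support) :
    ∃ (p₁ : G.Walk u z) (p₂ : G.Walk z v), p = p₁.append p₂ := by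
  classical
  exact ⟨p.takeUntil z h, p.dropUntil z h, (p.take_spec h).symm⟩

lemma append_split_at {u v : V} (p : G.Walk u v) (m : ℕ) (h : m ≤ p.length) :
    ∃ (z : V) (p₁ : G.Walk u z) (p₂ : G.Walk z v), p = p₁.append p₂ ∧ p₁.length = m := by
  induction p generalizing m with
  | nil => exact ⟨_, .nil, .nil, rfl, by simpa using Eq.symm (Nat.le_zero.1 h)⟩
  | @cons a b c hab p ih =>
    cases m with
    | zero => exact ⟨_, .nil, .cons hab p, rfl, rfl⟩
    | succ m =>
      obtain ⟨z, p₁, p₂, rfl, h₂⟩ := ih m (by simpa using h)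
      exact ⟨z, .cons hab p₁, p₂, rfl, by simp [h₂]⟩

/-- The middle part of a geodesic walk is geodesic. -/
lemma geodesic_middle {u a b v : V} (p₁ : G.Walk u a) (q : G.Walk a b) (p₂ : G.Walk b v)
    (h : p₁.length + q.length + p₂.length = G.dist u v) : q.length = G.dist a b := by
  obtain ⟨s, hs⟩ := q.reachable.exists_walk_length_eq_dist
  have h₁ := dist_le ((p₁.append s).append p₂)
  have h₂ := dist_le q
  simp only [Walk.length_append] at h₁
  omega

/-- Any two vertices of a geodesic walk, in either order, are joined by a geodesic contained
in it. -/
lemma subgeodesic {u v a b : V} (p : G.Walk u v) (hp : p.length = G.dist u v)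
    (ha : a ∈ p.support) (hb : b ∈ p.support) :
    ∃ q : G.Walk a b, q.length = G.dist a b ∧ ∀ z ∈ q.support, z ∈ p.support := by
  obtain ⟨p₁, p₂, rfl⟩ := append_split p ha
  rw [Walk.mem_support_append_iff] at hb
  simp only [Walk.length_append] at hp
  rcases hb with hb | hb
  · obtain ⟨r, q, rfl⟩ := append_split p₁ hb
    simp only [Walk.length_append] at hp
    refine ⟨q.reverse, ?_, ?_⟩
    · rw [Walk.length_reverse, geodesic_middle r q p₂ hp, dist_comm]
    · intro z hz
      simp only [Walk.support_reverse, List.mem_reverse] at hz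
      simp [Walk.mem_support_append_iff, hz]
  · obtain ⟨q, r, rfl⟩ := append_split p₂ hb
    simp only [Walk.length_append] at hp
    refine ⟨q, geodesic_middle p₁ q r (by omega), ?_⟩
    intro z hz
    simp [Walk.mem_support_append_iff, hz]

/-- Discrete intermediate value property: along a walk, a function growing by at most one per step
attains the value `M`, or stays at most `M` up to the endpoint. -/
lemma walk_ivt (f : V → ℕ) (hf : ∀ a b, G.Adj a b → f b ≤ f a + 1) (M : ℕ) {u v : V}
    (p : G.Walk u v) (hu : f u ≤ M) :
    ∃ a ∈ p.support, f a ≤ M ∧ (a = v ∨ f a = M) := by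
  induction p with
  | nil => exact ⟨_, by simp, hu, Or.inl rfl⟩
  | @cons a b c hab p ih =>
    by_cases h : f a = M
    · exact ⟨a, by simp, hu, Or.inr h⟩
    · obtain ⟨z, hz, h₁, h₂⟩ := ih (by have := hf a b hab; omega)
      exact ⟨z, by simp [hz], h₁, h₂⟩

end General

/-! ### Paths in the cone-off and the logarithmic estimate -/

section Cone

variable {V : Type*} {G : SimpleGraph V} {𝒴 : Set (Set V)}

lemma adj_inl {a b : V} : (coneOff G 𝒴).Adj (Sum.inl a) (Sum.inl b) ↔ G.Adj a b := by
  simp only [coneOff, fromRel_adj]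
  constructor
  · rintro ⟨-, h | h⟩
    exacts [h, h.symm]
  · intro h
    exact ⟨by simpa using h.ne, Or.inl h⟩

lemma adj_inr {a : V} {Y : 𝒴} :
    (coneOff G 𝒴).Adj (Sum.inl a) (Sum.inr Y) ↔ a ∈ (Y : Set V) := by
  simp [coneOff, fromRel_adj]

lemma not_adj_inr_inr {Y Z : 𝒴} : ¬ (coneOff G 𝒴).Adj (Sum.inr Y) (Sum.inr Z) := by
  simp [coneOff, fromRel_adj]

lemma walk_lift {a b : V} (p : G.Walk a b) :
    ∃ q : (coneOff G 𝒴).Walk (Sum.inl a) (Sum.inl b), q.length = p.length := by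
  let f : G →g coneOff G 𝒴 := ⟨Sum.inl, fun h => adj_inl.2 h⟩
  exact ⟨p.map f, p.length_map f⟩

lemma exists_walk_le (hG : G.Connected) (a b : V) :
    ∃ q : (coneOff G 𝒴).Walk (Sum.inl a) (Sum.inl b), q.length = G.dist a b := by
  obtain ⟨p, hp⟩ := (hG a b).exists_walk_length_eq_dist
  obtain ⟨q, hq⟩ := walk_lift (𝒴 := 𝒴) p
  exact ⟨q, hq.trans hp⟩

lemma reach_inl (hG : G.Connected) (a b : V) :
    (coneOff G 𝒴).Reachable (Sum.inl a) (Sum.inl b) :=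
  (exists_walk_le hG a b).choose.reachable

lemma dist_cone_le (hG : G.Connected) (a b : V) :
    (coneOff G 𝒴).dist (Sum.inl a) (Sum.inl b) ≤ G.dist a b := by
  obtain ⟨q, hq⟩ := exists_walk_le (𝒴 := 𝒴) hG a b
  exact hq ▸ dist_le q

lemma dist_start_le {a b v : V} (p : G.Walk a b) (hv : v ∈ p.support) :
    G.dist v a ≤ p.length := by
  obtain ⟨p₁, p₂, rfl⟩ := append_split p hv
  have := dist_le p₁.reverse
  simp only [Walk.length_reverse, Walk.length_append] at *
  omega

/-- A `G`-geodesic between vertices at most two steps apart in the cone-off stays close to any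
path of the cone-off of length at most two joining them. -/
lemma log_base (hG : G.Connected) {K : ℝ} (hK : 0 ≤ K) (h𝒴 : ∀ Y ∈ 𝒴, QuasiconvexIn G K Y)
    {a b : V} (q : (coneOff G 𝒴).Walk (Sum.inl a) (Sum.inl b)) (hq : q.length ≤ 2)
    (p : G.Walk a b) (hp : p.length = G.dist a b) {v : V} (hv : v ∈ p.support) :
    ∃ u ∈ q.support, ∃ s : (coneOff G 𝒴).Walk (Sum.inl v) u, (s.length : ℝ) ≤ K + 2 := by
  -- if the endpoints are already close in `G`, then `v` is close to `a`
  have key : G.dist a b ≤ 2 →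
      ∃ u ∈ q.support, ∃ s : (coneOff G 𝒴).Walk (Sum.inl v) u, (s.length : ℝ) ≤ K + 2 := by
    intro h
    obtain ⟨s, hs⟩ := exists_walk_le (𝒴 := 𝒴) hG v a
    refine ⟨_, q.start_mem_support, s, ?_⟩
    have h₁ := dist_start_le p hv
    have : (s.length : ℝ) ≤ 2 := by exact_mod_cast (by omega : s.length ≤ 2)
    linarith
  rcases q with _ | @⟨_, c, _, hac, q⟩
  · apply key; simp
  rcases q with _ | @⟨_, d, _, hcd, q⟩
  · apply key
    have := dist_le (adj_inl.1 hac).toWalk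
    simp at this
    omega
  have hq0 : q.length = 0 := by simp only [Walk.length_cons] at hq; omega
  obtain rfl := Walk.eq_of_length_eq_zero hq0
  rcases c with c | Y
  · apply key
    have := dist_le (Walk.cons (adj_inl.1 hac) (adj_inl.1 hcd).toWalk)
    simpa using this
  · have ha := adj_inr.1 hac
    have hb := adj_inr.1 hcd.symm
    obtain ⟨u, hu, hvu⟩ := h𝒴 Y Y.2 ha hb p hp v hv
    obtain ⟨s, hs⟩ := exists_walk_le (𝒴 := 𝒴) hG v u
    refine ⟨Sum.inr Y, by simp, s.concat (adj_inr.2 hu), ?_⟩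
    rw [Walk.length_concat, hs]
    push_cast
    linarith

/-- Halving step of the logarithmic estimate.  The walk must be cut at a vertex of `G`; since no two
cone vertices are adjacent, one of the positions `m` and `m + 1` will do. -/
lemma halve {a b : V} (q : (coneOff G 𝒴).Walk (Sum.inl a) (Sum.inl b)) {m : ℕ}
    (h₁ : m + 1 < q.length) (h₂ : q.length ≤ 2 * m + 1) :
    ∃ (c : V) (q₁ : (coneOff G 𝒴).Walk (Sum.inl a) (Sum.inl c))
      (q₂ : (coneOff G 𝒴).Walk (Sum.inl c) (Sum.inl b)),
      q₁.length ≤ m + 1 ∧ q₂.length ≤ m + 1 ∧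
      ∀ u, u ∈ q₁.support ∨ u ∈ q₂.support → u ∈ q.support := by
  obtain ⟨z, q₁, q₂, rfl, hl⟩ := append_split_at q m (by omega)
  rw [Walk.length_append] at h₁ h₂
  rcases z with c | Y
  · refine ⟨c, q₁, q₂, by omega, by omega, ?_⟩
    intro u hu
    rwa [Walk.mem_support_append_iff]
  · rcases q₂ with _ | @⟨_, d, _, hd, q₂⟩
    rcases d with d | Z
    · rw [Walk.length_cons] at h₁ h₂
      refine ⟨d, q₁.concat hd, q₂, by rw [Walk.length_concat]; omega, by omega, ?_⟩
      intro u hu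
      rw [Walk.mem_support_append_iff]
      rw [Walk.support_concat] at hu
      simp only [List.mem_append, List.mem_singleton] at hu
      rcases hu with (hu | rfl) | hu
      · exact Or.inl hu
      · exact Or.inr (by simp)
      · exact Or.inr (by simp [hu])
    · exact absurd hd not_adj_inr_inr

/-- A `G`-geodesic lies within `k * δ + K + 2` of any path of the cone-off with the same endpoints
and of length at most `2 ^ k + 1`. -/
lemma log_estimate (hG : G.Connected) {δ K : ℝ} (hδ : 0 ≤ δ) (hK : 0 ≤ K)
    (hs : SlimTrianglesG G δ) (h𝒴 : ∀ Y ∈ 𝒴, QuasiconvexIn G K Y) (k : ℕ) :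
    ∀ {a b : V} (q : (coneOff G 𝒴).Walk (Sum.inl a) (Sum.inl b)), q.length ≤ 2 ^ k + 1 →
      ∀ p : G.Walk a b, p.length = G.dist a b → ∀ v ∈ p.support,
      ∃ u ∈ q.support, ∃ s : (coneOff G 𝒴).Walk (Sum.inl v) u,
        (s.length : ℝ) ≤ k * δ + K + 2 := by
  induction k with
  | zero =>
    intro a b q hq p hp v hv
    obtain ⟨u, hu, s, h⟩ := log_base hG hK h𝒴 q (by simpa using hq) p hp hv
    exact ⟨u, hu, s, by simpa using h⟩
  | succ k ih =>
    intro a b q hq p hp v hv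
    by_cases hlen : q.length ≤ 2 ^ k + 1
    · obtain ⟨u, hu, s, h⟩ := ih q hlen p hp v hv
      refine ⟨u, hu, s, ?_⟩
      push_cast
      linarith
    · obtain ⟨c, q₁, q₂, hq₁, hq₂, hsub⟩ :=
        halve q (m := 2 ^ k) (by omega) (by rw [pow_succ] at hq; omega)
      obtain ⟨p₁, hp₁⟩ := (hG a c).exists_walk_length_eq_dist
      obtain ⟨p₂, hp₂⟩ := (hG c b).exists_walk_length_eq_dist
      obtain ⟨z, hz, hvz⟩ := hs p p₁ p₂ hp hp₁ hp₂ v hv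
      obtain ⟨r, hr⟩ := exists_walk_le (𝒴 := 𝒴) hG v z
      have hex : ∃ u ∈ q.support, ∃ s : (coneOff G 𝒴).Walk (Sum.inl z) u,
          (s.length : ℝ) ≤ k * δ + K + 2 := by
        rcases hz with hz | hz
        · obtain ⟨u, hu, h⟩ := ih q₁ hq₁ p₁ hp₁ z hz
          exact ⟨u, hsub u (Or.inl hu), h⟩
        · obtain ⟨u, hu, h⟩ := ih q₂ hq₂ p₂ hp₂ z hz
          exact ⟨u, hsub u (Or.inr hu), h⟩
      obtain ⟨u, hu, s, h⟩ := hex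
      refine ⟨u, hu, r.append s, ?_⟩
      rw [Walk.length_append, hr]
      push_cast
      linarith

/-! ### Bootstrapping -/

/-- One of the two connecting paths from `[x, y]` to `γ`.  The set `S` stands for the vertices of
`γ`, `v₀` for the vertex of `[x, y]` farthest from `γ`, and `p` for the half of `[x, y]` from
`v₀` to the endpoint `z`. -/
lemma connector (hG : G.Connected) (S : Set (V ⊕ ↥𝒴)) {v₀ z : V} (M : ℕ)
    (hz : (Sum.inl z : V ⊕ ↥𝒴) ∈ S)
    (hmin : ∀ u ∈ S, M ≤ (coneOff G 𝒴).dist (Sum.inl v₀) u)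
    (p : G.Walk v₀ z)
    (hmax : ∀ v ∈ p.support, ∃ u ∈ S,
      ∃ s : (coneOff G 𝒴).Walk (Sum.inl v) u, s.length ≤ M) :
    ∃ a ∈ p.support, (coneOff G 𝒴).dist (Sum.inl v₀) (Sum.inl a) ≤ 2 * M ∧
      ∃ a' ∈ S, ∃ s : (coneOff G 𝒴).Walk (Sum.inl a) a', s.length ≤ M ∧
        ∀ u ∈ s.support, M ≤ (coneOff G 𝒴).dist (Sum.inl v₀) u := by
  obtain ⟨a, ha, h₁, h₂⟩ := walk_ivt (G := G)
    (fun v => (coneOff G 𝒴).dist (Sum.inl v₀) (Sum.inl v)) (by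
      intro a b hab
      have h₁ := dist_tri (reach_inl (𝒴 := 𝒴) hG v₀ a) (reach_inl hG a b)
      have h₂ := dist_le (adj_inl (𝒴 := 𝒴).2 hab).toWalk
      simp only [Walk.length_cons, Walk.length_nil] at h₂
      show (coneOff G 𝒴).dist _ _ ≤ (coneOff G 𝒴).dist _ _ + 1
      omega) (2 * M) p (by simp)
  refine ⟨a, ha, h₁, ?_⟩
  rcases h₂ with rfl | h₂
  · refine ⟨_, hz, .nil, by simp, ?_⟩
    intro u hu
    obtain rfl : u = Sum.inl a := by simpa using hu
    exact hmin _ hz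
  · obtain ⟨a', ha', s, hs⟩ := hmax a ha
    refine ⟨a', ha', s, hs, ?_⟩
    intro u hu
    obtain ⟨s₁, s₂, rfl⟩ := append_split s hu
    have h₃ := dist_tri ((reach_inl hG v₀ a).trans s₁.reachable) s₁.reachable.symm
    have h₄ := dist_le s₁.reverse
    rw [Walk.length_append] at hs
    rw [Walk.length_reverse] at h₄
    omega

/-- The maximal distance `M` from `[x, y]` to `γ` in the cone-off satisfies a logarithmic
self-bound. -/
lemma self_bound (hG : G.Connected) {δ K : ℝ} (hδ : 0 ≤ δ) (hK : 0 ≤ K)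
    (hs : SlimTrianglesG G δ) (h𝒴 : ∀ Y ∈ 𝒴, QuasiconvexIn G K Y) {x y v₀ : V}
    (p : G.Walk x y) (hp : p.length = G.dist x y)
    (γ : (coneOff G 𝒴).Walk (Sum.inl x) (Sum.inl y))
    (hγ : γ.length = (coneOff G 𝒴).dist (Sum.inl x) (Sum.inl y)) (hv₀ : v₀ ∈ p.support)
    (M k : ℕ) (hk : 8 * M ≤ 2 ^ k + 1)
    (hmin : ∀ u ∈ γ.support, M ≤ (coneOff G 𝒴).dist (Sum.inl v₀) u)
    (hmax : ∀ v ∈ p.support, ∃ u ∈ γ.support,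
      ∃ s : (coneOff G 𝒴).Walk (Sum.inl v) u, s.length ≤ M) :
    (M : ℝ) ≤ k * δ + K + 2 := by
  obtain ⟨p₁, p₂, rfl⟩ := append_split p hv₀
  obtain ⟨a, ha, hda, a', ha', sa, hsa, hsa'⟩ :=
    connector hG {u | u ∈ γ.support} M γ.start_mem_support hmin p₁.reverse (fun v hv =>
      hmax v (by
        rw [Walk.support_reverse, List.mem_reverse] at hv
        simp [Walk.mem_support_append_iff, hv]))
  obtain ⟨b, hb, hdb, b', hb', sb, hsb, hsb'⟩ :=
    connector hG {u | u ∈ γ.support} M γ.end_mem_support hmin p₂ (fun v hv =>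
      hmax v (by simp [Walk.mem_support_append_iff, hv]))
  obtain ⟨g, hg, hgsub⟩ := subgeodesic γ hγ ha' hb'
  rw [Walk.support_reverse, List.mem_reverse] at ha
  obtain ⟨p₀, r₁, rfl⟩ := append_split p₁ ha
  obtain ⟨r₂, p₃, rfl⟩ := append_split p₂ hb
  have hgeo : (r₁.append r₂).length = G.dist a b := by
    apply geodesic_middle p₀ _ p₃
    simp only [Walk.length_append] at hp ⊢
    omega
  have hlen : g.length ≤ 6 * M := by
    have h₁ := dist_tri sa.reachable.symm ((reach_inl hG a v₀).trans
      ((reach_inl hG v₀ b).trans sb.reachable))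
    have h₂ := dist_tri (reach_inl (𝒴 := 𝒴) hG a v₀)
      ((reach_inl hG v₀ b).trans sb.reachable)
    have h₃ := dist_tri (reach_inl (𝒴 := 𝒴) hG v₀ b) sb.reachable
    have h₄ := dist_le sa.reverse
    have h₅ := dist_le sb
    rw [Walk.length_reverse] at h₄
    rw [dist_comm] at hda
    omega
  obtain ⟨u, hu, s, hsl⟩ := log_estimate hG hδ hK hs h𝒴 k
    ((sa.append g).append sb.reverse) (by
      simp only [Walk.length_append, Walk.length_reverse]
      omega) (r₁.append r₂) hgeo v₀ (by simp [Walk.mem_support_append_iff])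
  have hMu : M ≤ (coneOff G 𝒴).dist (Sum.inl v₀) u := by
    simp only [Walk.mem_support_append_iff, Walk.support_reverse, List.mem_reverse] at hu
    rcases hu with (hu | hu) | hu
    · exact hsa' u hu
    · exact hmin u (hgsub u hu)
    · exact hsb' u hu
  have : (M : ℝ) ≤ s.length := by exact_mod_cast hMu.trans (dist_le s)
  linarith

end Cone

/-- A quantity bounded by an affine function of its own logarithm is bounded. -/
lemma numeric_bound (δ K : ℝ) : ∃ N : ℕ, ∀ M : ℕ,
    (∀ k : ℕ, 8 * M ≤ 2 ^ k + 1 → (M : ℝ) ≤ k * δ + K + 2) → M ≤ N := by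
  have hlim : Filter.Tendsto (fun k : ℕ => ((k : ℝ) * (8 * δ) + (8 * (δ + K + 2))) / 2 ^ k)
      Filter.atTop (nhds 0) := by
    have h₁ := (tendsto_self_mul_const_pow_of_lt_one (r := (1 / 2 : ℝ)) (by norm_num)
      (by norm_num)).mul_const (8 * δ)
    have h₂ := (tendsto_pow_atTop_nhds_zero_of_lt_one (r := (1 / 2 : ℝ)) (by norm_num)
      (by norm_num)).mul_const (8 * (δ + K + 2))
    have h₃ := h₁.add h₂
    simp only [zero_mul, add_zero] at h₃
    refine h₃.congr fun k => ?_
    rw [one_div, inv_pow]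
    field_simp
  obtain ⟨N, hN⟩ := Filter.eventually_atTop.1 (hlim.eventually (gt_mem_nhds one_pos))
  refine ⟨2 ^ N, fun M hM => ?_⟩
  by_contra! hlt
  have hM0 : 8 * M ≠ 0 := by have := Nat.zero_le (2 ^ N); omega
  -- `2 ^ k ≤ 8 * M < 2 ^ (k + 1)`
  set k := Nat.log 2 (8 * M) with hk
  have h₁ : 2 ^ k ≤ 8 * M := Nat.pow_log_le_self 2 hM0
  have h₂ : 8 * M < 2 ^ (k + 1) := Nat.lt_pow_succ_log_self (by norm_num) _
  have h₃ : N ≤ k := Nat.le_log_of_pow_le (by norm_num) (by omega)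
  have h₄ := hN k h₃
  rw [div_lt_one (by positivity)] at h₄
  have h₅ := hM (k + 1) (by omega)
  have h₆ : (2 : ℝ) ^ k ≤ 8 * M := by exact_mod_cast h₁
  push_cast at h₅
  linarith

end ConeOffAux

open ConeOffAux in
/-- For all `δ, K ≥ 0` there is `D` with the following property.  Let `X̂` be the cone-off
of a `δ`-hyperbolic graph `G` with respect to a family `𝒴` of `K`-quasiconvex subsets.
If `[x,y]` is a geodesic in `G`, `γ` is a geodesic in `X̂` from `x` to `y`, and `w` is a
vertex with `d_X(w,[x,y]) ≤ t`, then `d_{X̂}(w,γ) ≤ t + D + K + 1`. -/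
theorem vertex_close_to_coned_geodesic (δ K : ℝ) (hδ : 0 ≤ δ) (hK : 0 ≤ K) :
    ∃ D : ℝ,
      ∀ (V : Type u) (G : SimpleGraph V), G.Connected → SlimTrianglesG G δ →
        ∀ 𝒴 : Set (Set V), (∀ Y ∈ 𝒴, QuasiconvexIn G K Y) →
          ∀ x y w : V, ∀ p : G.Walk x y, p.length = G.dist x y →
            ∀ γ : (coneOff G 𝒴).Walk (Sum.inl x) (Sum.inl y),
              γ.length = (coneOff G 𝒴).dist (Sum.inl x) (Sum.inl y) →
              ∀ t : ℝ, 0 ≤ t →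
                (∃ v ∈ p.support, (G.dist w v : ℝ) ≤ t) →
                ∃ u ∈ γ.support,
                  ((coneOff G 𝒴).dist (Sum.inl w) u : ℝ) ≤ t + D + K + 1 := by
  obtain ⟨N, hN⟩ := numeric_bound δ K
  refine ⟨N, ?_⟩
  intro V G hG hs 𝒴 h𝒴 x y w p hp γ hγ t ht ⟨v, hv, hwv⟩
  have hreach : ∀ (v : V), ∀ u ∈ γ.support, (coneOff G 𝒴).Reachable (Sum.inl v) u := by
    intro v u hu
    obtain ⟨q, -, -⟩ := append_split γ hu
    exact (reach_inl hG v x).trans q.reachable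
  -- `π v` is a vertex of `γ` nearest to `v` in the cone-off
  have hnear : ∀ v : V, ∃ u ∈ γ.support, ∀ u' ∈ γ.support,
      (coneOff G 𝒴).dist (Sum.inl v) u ≤ (coneOff G 𝒴).dist (Sum.inl v) u' := fun v =>
    Set.exists_min_image {u | u ∈ γ.support} (fun u => (coneOff G 𝒴).dist (Sum.inl v) u)
      (List.finite_toSet _) ⟨_, γ.start_mem_support⟩
  choose π hπ hπmin using hnear
  obtain ⟨v₀, hv₀, hv₀max⟩ := Set.exists_max_image {v | v ∈ p.support}
    (fun v => (coneOff G 𝒴).dist (Sum.inl v) (π v))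
    (List.finite_toSet _) ⟨_, p.start_mem_support⟩
  have hM := hN ((coneOff G 𝒴).dist (Sum.inl v₀) (π v₀)) fun k hk =>
    self_bound hG hδ hK hs h𝒴 p hp γ hγ hv₀ _ k hk (hπmin v₀) fun v hv => by
      obtain ⟨s, hs⟩ := (hreach v (π v) (hπ v)).exists_walk_length_eq_dist
      exact ⟨π v, hπ v, s, hs ▸ hv₀max v hv⟩
  refine ⟨π v, hπ v, ?_⟩
  have h₁ := dist_tri (reach_inl hG w v) (hreach v (π v) (hπ v))
  have h₂ := dist_cone_le (𝒴 := 𝒴) hG w v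
  have h₃ : (coneOff G 𝒴).dist (Sum.inl v) (π v) ≤ N := (hv₀max v hv).trans hM
  have h₄ : ((coneOff G 𝒴).dist (Sum.inl w) (π v) : ℝ) ≤ G.dist w v + N := by
    exact_mod_cast (by omega)
  linarith
end

section
/- Let X be a δ-hyperbolic graph, let 𝒴 be an M0-geometrically separated family of nonempty K-quasiconvex subsets of X, and let X̂ be the cone-off of X with respect to 𝒴. There is a constant C, depending only on δ, K and M0 and bounded above by a linear function of M0 (with coefficients depending only on δ and K), such that for every Y ∈ 𝒴 and all x, y ∈ X̂ − {v_Y}: if some geodesic in X̂ from x to y does not pass through the cone vertex v_Y, then d_Y^π(x,y) ≤ C. -/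
/-!
The statement follows from three estimates, in which only the last uses geometric separation.

* Geodesics of `G` are uniformly close, in the cone-off metric, to geodesics of the cone-off
  (`geodesic_close`). By dyadic subdivision and slimness, a geodesic of `G` is within
  `δ log₂ m + O(1)` of any cone-off path of length `m` with the same endpoints (`polygon`): each
  cone edge is replaced by a geodesic of `G` between two points of a quasiconvex set. If `D` is
  the maximal distance from the geodesic of `G` to the cone-off geodesic, attained at `p`, then
  short detours around `p` give such a path of length `O(D)` at distance at least `D - O(1)` from
  `p`, so `D` is at most logarithmic in `D` (`max_bound`), hence bounded in terms of `δ` and `K`.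
* If nearest-point projections of `x, y` to `Y` are far apart, a geodesic from `x` to `y` comes
  close to `Y` (`close_of_far_proj`). Hence a cone-off geodesic that stays outside a fixed ball
  about `v_Y` has endpoints with close projections (`far_bound`), with constants in `δ`, `K`.
* One step of a cone-off path avoiding `v_Y` moves the projection to `Y` by at most
  `L = M0 + O(δ + K + 1)` (`step_bound`).

A cone-off geodesic avoiding `v_Y` is cut at the first and last vertices in the ball about `v_Y`.
The outer parts are handled by the second estimate, and the middle part has length at most twice
the radius, which is independent of `M0`, so the third estimate gives a bound linear in `M0`.

Geodesics of `G` are handled through metric intervals (`Btw`), and geodesics of the cone-off as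
functions on `ℕ` (`IsGeo`). Cone vertices are replaced by points of their bases (`IsBase`).
-/

open scoped ENNReal

/-- The projection `π_Y` extended to the vertices of the cone-off: a vertex of `G`
projects by nearest-point projection, and a cone vertex `v_U` projects to `π_Y(U)`. -/
def projHat {V : Type*} (G : SimpleGraph V) (𝒴 : Set (Set V)) (Y : Set V) :
    (V ⊕ ↥𝒴) → Set V
  | Sum.inl x => projSet G Y x
  | Sum.inr U => projSetOf G Y (U : Set V)

namespace StrongBGI

open SimpleGraph

/-! ### Metric intervals -/

/-- `v` lies on some geodesic of `G` from `x` to `y`, expressed metrically. -/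
def Btw {V : Type*} (G : SimpleGraph V) (x y v : V) : Prop :=
  G.dist x v + G.dist v y = G.dist x y

theorem Btw.symm {V : Type*} {G : SimpleGraph V} {x y v : V} (h : Btw G x y v) :
    Btw G y x v := by
  unfold Btw at *
  rw [G.dist_comm (u := y) (v := v), G.dist_comm (u := v) (v := x), G.dist_comm (u := y) (v := x)]
  omega

theorem dist_getVert {V : Type*} {G : SimpleGraph V} (hG : G.Connected) {x y : V}
    (p : G.Walk x y) (hp : p.length = G.dist x y) {i j : ℕ} (hij : i ≤ j) (hj : j ≤ p.length) :
    G.dist (p.getVert i) (p.getVert j) = j - i := by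
  have key : ∀ i k : ℕ, i + k ≤ p.length →
      G.dist (p.getVert i) (p.getVert (i + k)) ≤ k := by
    intro i k
    induction k with
    | zero => intro _; simp
    | succ k ih =>
      intro h
      have h1 := ih (by omega)
      have h2 : G.Adj (p.getVert (i + k)) (p.getVert (i + k + 1)) :=
        p.adj_getVert_succ (by omega)
      have h3 := hG.dist_triangle (u := p.getVert i) (v := p.getVert (i + k))
        (w := p.getVert (i + k + 1))
      have h4 := SimpleGraph.dist_eq_one_iff_adj.mpr h2
      rw [← add_assoc]
      omega
  have h1 := key 0 i (by omega)
  have h2 := key i (j - i) (by omega)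
  have h3 := key j (p.length - j) (by omega)
  rw [show 0 + i = i by omega, Walk.getVert_zero] at h1
  rw [show i + (j - i) = j by omega] at h2
  rw [show j + (p.length - j) = p.length by omega, Walk.getVert_length] at h3
  have h4 := hG.dist_triangle (u := x) (v := p.getVert i) (w := p.getVert j)
  have h5 := hG.dist_triangle (u := x) (v := p.getVert j) (w := y)
  omega

theorem exists_param {V : Type*} {G : SimpleGraph V} (hG : G.Connected) (x y : V) :
    ∃ f : ℕ → V, f 0 = x ∧ f (G.dist x y) = y ∧
      ∀ i j, i ≤ j → j ≤ G.dist x y → G.dist (f i) (f j) = j - i := by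
  obtain ⟨p, hp⟩ := hG.exists_walk_length_eq_dist x y
  refine ⟨p.getVert, p.getVert_zero, ?_, ?_⟩
  · rw [← hp]; exact p.getVert_length
  · intro i j hij hj
    exact dist_getVert hG p hp hij (by omega)

theorem btw_of_mem_support {V : Type*} {G : SimpleGraph V} (hG : G.Connected) {x y v : V}
    (p : G.Walk x y) (hp : p.length = G.dist x y) (hv : v ∈ p.support) : Btw G x y v := by
  classical
  obtain ⟨n, rfl, hn⟩ := Walk.mem_support_iff_exists_getVert.mp hv
  have h1 := dist_getVert hG p hp (Nat.zero_le n) hn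
  have h2 := dist_getVert hG p hp hn le_rfl
  rw [Walk.getVert_zero] at h1
  rw [Walk.getVert_length] at h2
  unfold Btw
  omega

theorem Btw.exists_walk {V : Type*} {G : SimpleGraph V} (hG : G.Connected) {x y v : V}
    (h : Btw G x y v) : ∃ p : G.Walk x y, p.length = G.dist x y ∧ v ∈ p.support := by
  obtain ⟨p, hp⟩ := hG.exists_walk_length_eq_dist x v
  obtain ⟨q, hq⟩ := hG.exists_walk_length_eq_dist v y
  refine ⟨p.append q, ?_, ?_⟩
  · rw [Walk.length_append, hp, hq]; exact h
  · rw [Walk.mem_support_append_iff]; exact Or.inl p.end_mem_support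

/-- `SlimTrianglesG` in terms of metric intervals instead of walks. -/
def BtwSlim {V : Type*} (G : SimpleGraph V) (δ : ℝ) : Prop :=
  ∀ x y z v : V, Btw G x y v → ∃ w, (Btw G x z w ∨ Btw G z y w) ∧ (G.dist v w : ℝ) ≤ δ

/-- `QuasiconvexIn` in terms of metric intervals instead of walks. -/
def BtwQC {V : Type*} (G : SimpleGraph V) (K : ℝ) (Y : Set V) : Prop :=
  ∀ x ∈ Y, ∀ y ∈ Y, ∀ v, Btw G x y v → ∃ u ∈ Y, (G.dist v u : ℝ) ≤ K

theorem btwSlim_of_slim {V : Type*} {G : SimpleGraph V} (hG : G.Connected) {δ : ℝ}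
    (h : SlimTrianglesG G δ) : BtwSlim G δ := by
  intro x y z v hv
  obtain ⟨p, hp, hvp⟩ := hv.exists_walk hG
  obtain ⟨q, hq⟩ := hG.exists_walk_length_eq_dist x z
  obtain ⟨r, hr⟩ := hG.exists_walk_length_eq_dist z y
  obtain ⟨w, hw, hd⟩ := h p q r hp hq hr v hvp
  refine ⟨w, ?_, hd⟩
  rcases hw with hw | hw
  · exact Or.inl (btw_of_mem_support hG q hq hw)
  · exact Or.inr (btw_of_mem_support hG r hr hw)

theorem btwQC_of_qc {V : Type*} {G : SimpleGraph V} (hG : G.Connected) {K : ℝ} {Y : Set V}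
    (h : QuasiconvexIn G K Y) : BtwQC G K Y := by
  intro x hx y hy v hv
  obtain ⟨p, hp, hvp⟩ := hv.exists_walk hG
  exact h hx hy p hp v hvp

theorem triR {V : Type*} {G : SimpleGraph V} (hG : G.Connected) (x y z : V) :
    (G.dist x z : ℝ) ≤ G.dist x y + G.dist y z := by
  exact_mod_cast hG.dist_triangle

theorem commR {V : Type*} (G : SimpleGraph V) (x y : V) :
    (G.dist x y : ℝ) = G.dist y x := by
  rw [SimpleGraph.dist_comm]

theorem Btw.real {V : Type*} {G : SimpleGraph V} {x y v : V} (h : Btw G x y v) :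
    (G.dist x v : ℝ) + G.dist v y = G.dist x y := by
  exact_mod_cast h

/-! ### Nearest-point projections to quasiconvex sets -/

theorem projSet_nonempty {V : Type*} (G : SimpleGraph V) {Y : Set V} (hY : Y.Nonempty) (z : V) :
    (projSet G Y z).Nonempty := by
  classical
  have hex : ∃ n, ∃ y ∈ Y, G.dist z y = n := ⟨_, hY.some, hY.some_mem, rfl⟩
  obtain ⟨y, hy, hyn⟩ := Nat.find_spec hex
  refine ⟨y, hy, fun y' hy' => ?_⟩
  rw [hyn]
  exact Nat.find_min' hex ⟨y', hy', rfl⟩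

/-- A point that is close both to `Y` and to a geodesic from `x` to a nearest point `p ∈ Y`
is close to `p`. -/
theorem near_proj {V : Type*} {G : SimpleGraph V} (hG : G.Connected) {Y : Set V} {δ K : ℝ}
    {x p v w u : V} (hp : p ∈ projSet G Y x) (hw : Btw G p x w) (hvw : (G.dist v w : ℝ) ≤ 2 * δ)
    (hu : u ∈ Y) (hvu : (G.dist v u : ℝ) ≤ K) : (G.dist p v : ℝ) ≤ 4 * δ + K := by
  have h1 : (G.dist x p : ℝ) ≤ G.dist x u := by exact_mod_cast hp.2 u hu
  have h2 := hw.real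
  have h3 := triR hG x w u
  have h4 := triR hG w v u
  have h5 := triR hG p w v
  rw [commR G w v] at h4 h5
  rw [commR G x w] at h3
  rw [commR G x p] at h1
  linarith

/-- In a quadrilateral `x, p, q, y` whose vertices `p, q` are nearest points of `Y` to `x, y`,
the points of the side `[p, q]` away from `p` and `q` are close to the opposite side. -/
theorem quad {V : Type*} {G : SimpleGraph V} (hG : G.Connected) {Y : Set V} {δ K : ℝ}
    (hδ : 0 ≤ δ) (hs : BtwSlim G δ) (hY : BtwQC G K Y) {x y p q v : V}
    (hp : p ∈ projSet G Y x) (hq : q ∈ projSet G Y y) (hv : Btw G p q v)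
    (h1 : 4 * δ + K < G.dist p v) (h2 : 4 * δ + K < G.dist v q) :
    ∃ w, Btw G x y w ∧ (G.dist v w : ℝ) ≤ 2 * δ := by
  obtain ⟨u, hu, hvu⟩ := hY p hp.1 q hq.1 v hv
  obtain ⟨w, hw | hw, hd⟩ := hs p q x v hv
  · have := near_proj (δ := δ) hG hp hw (by linarith) hu hvu
    linarith
  · obtain ⟨w', hw', hd'⟩ := hs x q y w hw
    have h3 := triR hG v w w'
    rcases hw' with hw' | hw'
    · exact ⟨w', hw', by linarith⟩
    · have := near_proj (δ := δ) hG hq hw'.symm (by linarith) hu hvu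
      rw [commR G q v] at this
      linarith

theorem exists_btw_at {V : Type*} {G : SimpleGraph V} (hG : G.Connected) (x y : V) {n : ℕ}
    (hn : n ≤ G.dist x y) : ∃ v, Btw G x y v ∧ G.dist x v = n := by
  obtain ⟨f, h0, h1, h⟩ := exists_param hG x y
  have a := h 0 n (by omega) hn
  have b := h n _ hn le_rfl
  rw [h0] at a
  rw [h1] at b
  refine ⟨f n, ?_, by omega⟩
  unfold Btw
  omega

theorem far_point {V : Type*} {G : SimpleGraph V} (hG : G.Connected) {T : ℝ} (hT : 0 ≤ T)
    {p q : V} (h : 2 * T + 2 < G.dist p q) :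
    ∃ v, Btw G p q v ∧ T < G.dist p v ∧ (G.dist p v : ℝ) ≤ T + 1 ∧ T < G.dist v q := by
  have h1 := Nat.floor_le hT
  have h2 := Nat.lt_floor_add_one T
  have hn : ⌊T⌋₊ + 1 ≤ G.dist p q := by
    have : ((⌊T⌋₊ + 1 : ℕ) : ℝ) ≤ G.dist p q := by push_cast; linarith
    exact_mod_cast this
  obtain ⟨v, hv, hd⟩ := exists_btw_at hG p q hn
  have h3 : (G.dist p v : ℝ) = ⌊T⌋₊ + 1 := by rw [hd]; push_cast; rfl
  have h4 := hv.real
  exact ⟨v, hv, by linarith, by linarith, by linarith⟩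

/-- If the projections of `x` and `y` to `Y` are far apart, then some geodesic point between
`x` and `y` is close to `Y`. -/
theorem close_of_far_proj {V : Type*} {G : SimpleGraph V} (hG : G.Connected) {Y : Set V}
    {δ K : ℝ} (hδ : 0 ≤ δ) (hK : 0 ≤ K) (hs : BtwSlim G δ) (hY : BtwQC G K Y) {x y p q : V}
    (hp : p ∈ projSet G Y x) (hq : q ∈ projSet G Y y)
    (h : 2 * (4 * δ + K) + 2 < G.dist p q) :
    ∃ w, Btw G x y w ∧ ∃ u ∈ Y, (G.dist w u : ℝ) ≤ 2 * δ + K := by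
  obtain ⟨v, hv, h1, -, h2⟩ := far_point hG (by positivity) h
  obtain ⟨w, hw, hd⟩ := quad hG hδ hs hY hp hq hv h1 h2
  obtain ⟨u, hu, hvu⟩ := hY p hp.1 q hq.1 v hv
  have := triR hG w v u
  rw [commR G w v] at this
  exact ⟨w, hw, u, hu, by linarith⟩

/-- Nearest-point projection to `Y` is coarsely Lipschitz. -/
theorem proj_adj {V : Type*} {G : SimpleGraph V} (hG : G.Connected) {Y : Set V}
    {δ K : ℝ} (hδ : 0 ≤ δ) (hK : 0 ≤ K) (hs : BtwSlim G δ) (hY : BtwQC G K Y) {x y p q : V}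
    (hxy : G.dist x y ≤ 1) (hp : p ∈ projSet G Y x) (hq : q ∈ projSet G Y y) :
    (G.dist p q : ℝ) ≤ 2 * (4 * δ + K) + 3 := by
  by_contra hcon
  push Not at hcon
  obtain ⟨w, hw, u, hu, hd⟩ := close_of_far_proj hG hδ hK hs hY hp hq (by linarith)
  have hxy' : (G.dist x y : ℝ) ≤ 1 := by exact_mod_cast hxy
  have h1 : (G.dist x p : ℝ) ≤ G.dist x u := by exact_mod_cast hp.2 u hu
  have h2 : (G.dist y q : ℝ) ≤ G.dist y u := by exact_mod_cast hq.2 u hu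
  have h3 := triR hG x w u
  have h4 := triR hG y w u
  have h5 := hw.real
  have h6 := triR hG p x q
  have h7 := triR hG x y q
  rw [commR G p x] at h6
  rw [commR G y w] at h4
  linarith

/-- Distinct members of a geometrically separated family have bounded projections to
each other. -/
theorem proj_cone {V : Type*} {G : SimpleGraph V} (hG : G.Connected) {Y U : Set V}
    {δ K M0 : ℝ} (hδ : 0 ≤ δ) (hK : 0 ≤ K) (hM : 0 ≤ M0) (hs : BtwSlim G δ) (hY : BtwQC G K Y)
    (hU : BtwQC G K U)
    (hsep : ∀ a ∈ Y ∩ nbhd G (2 * K + 2 * δ) U, ∀ b ∈ Y ∩ nbhd G (2 * K + 2 * δ) U,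
      (G.dist a b : ℝ) ≤ M0) {x y p q : V} (hx : x ∈ U) (hy : y ∈ U)
    (hp : p ∈ projSet G Y x) (hq : q ∈ projSet G Y y) :
    (G.dist p q : ℝ) ≤ M0 + 2 * K + 2 * (4 * δ + K) + 3 := by
  by_cases hcon : (G.dist p q : ℝ) ≤ 2 * (4 * δ + K) + 2
  · linarith
  push Not at hcon
  have key : ∀ v, Btw G p q v → 4 * δ + K < G.dist p v → 4 * δ + K < G.dist v q →
      ∃ a ∈ Y ∩ nbhd G (2 * K + 2 * δ) U, (G.dist v a : ℝ) ≤ K := by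
    intro v hv h1 h2
    obtain ⟨w, hw, hd⟩ := quad hG hδ hs hY hp hq hv h1 h2
    obtain ⟨u, hu, hwu⟩ := hU x hx y hy w hw
    obtain ⟨a, ha, hva⟩ := hY p hp.1 q hq.1 v hv
    refine ⟨a, ⟨ha, u, hu, ?_⟩, hva⟩
    have h3 := triR hG a v u
    have h4 := triR hG v w u
    rw [commR G a v] at h3
    linarith
  obtain ⟨v, hv, h1, h2, h3⟩ := far_point hG (by positivity) hcon
  obtain ⟨v', hv', h1', h2', h3'⟩ := far_point hG (by positivity) (commR G p q ▸ hcon)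
  obtain ⟨a, ha, hva⟩ := key v hv h1 h3
  obtain ⟨b, hb, hvb⟩ := key v' hv'.symm (commR G v' p ▸ h3') (commR G q v' ▸ h1')
  have h4 := hsep a ha b hb
  have h5 := triR hG p v q
  have h6 := triR hG v a q
  have h7 := triR hG a b q
  have h8 := triR hG b v' q
  rw [commR G b v', commR G v' q] at h8
  linarith

/-! ### The cone-off -/

section ConeOff

variable {V : Type*} {G : SimpleGraph V} {𝒴 : Set (Set V)}

theorem adj_inl_inl {x y : V} :
    (coneOff G 𝒴).Adj (Sum.inl x) (Sum.inl y) ↔ G.Adj x y := by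
  simp only [coneOff, SimpleGraph.fromRel_adj]
  constructor
  · rintro ⟨-, h | h⟩
    · exact h
    · exact h.symm
  · intro h
    exact ⟨fun e => h.ne (Sum.inl_injective e), Or.inl h⟩

theorem adj_inl_inr {x : V} {U : 𝒴} :
    (coneOff G 𝒴).Adj (Sum.inl x) (Sum.inr U) ↔ x ∈ (U : Set V) := by
  simp [coneOff, SimpleGraph.fromRel_adj]

theorem not_adj_inr_inr {U W : 𝒴} : ¬ (coneOff G 𝒴).Adj (Sum.inr U) (Sum.inr W) := by
  simp [coneOff, SimpleGraph.fromRel_adj]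

/-- The inclusion of `G` in its cone-off. -/
def inlHom (G : SimpleGraph V) (𝒴 : Set (Set V)) : G →g coneOff G 𝒴 where
  toFun := Sum.inl
  map_rel' h := adj_inl_inl.mpr h

theorem coneOff_connected (hG : G.Connected) (hne : ∀ Y ∈ 𝒴, Y.Nonempty) :
    (coneOff G 𝒴).Connected := by
  obtain ⟨x0⟩ := hG.nonempty
  have key : ∀ a, (coneOff G 𝒴).Reachable (Sum.inl x0) a := by
    intro a
    rcases a with x | U
    · exact (hG.preconnected x0 x).map (inlHom G 𝒴)
    · obtain ⟨u, hu⟩ := hne U U.2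
      exact ((hG.preconnected x0 u).map (inlHom G 𝒴)).trans (adj_inl_inr.mpr hu).reachable
  exact { preconnected := fun a b => (key a).symm.trans (key b), nonempty := ⟨Sum.inl x0⟩ }

theorem dist_inl_le (hG : G.Connected) (x y : V) :
    (coneOff G 𝒴).dist (Sum.inl x) (Sum.inl y) ≤ G.dist x y := by
  obtain ⟨p, hp⟩ := hG.exists_walk_length_eq_dist x y
  have := SimpleGraph.dist_le (p.map (inlHom G 𝒴))
  rw [Walk.length_map, hp] at this
  exact this

theorem dist_inl_leR (hG : G.Connected) (x y : V) :
    ((coneOff G 𝒴).dist (Sum.inl x) (Sum.inl y) : ℝ) ≤ G.dist x y := by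
  exact_mod_cast dist_inl_le hG x y

/-- `φ` retracts the cone-off to `V`, sending each cone vertex to a point of its base. -/
def IsBase (φ : V ⊕ ↥𝒴 → V) : Prop :=
  (∀ x, φ (Sum.inl x) = x) ∧ ∀ U : 𝒴, φ (Sum.inr U) ∈ (U : Set V)

theorem exists_isBase (hne : ∀ Y ∈ 𝒴, Y.Nonempty) : ∃ φ : V ⊕ ↥𝒴 → V, IsBase φ :=
  ⟨Sum.elim id fun U => (hne U U.2).some, fun _ => rfl, fun U => (hne U U.2).some_mem⟩

theorem IsBase.dist_le {φ : V ⊕ ↥𝒴 → V} (hφ : IsBase φ) (a : V ⊕ ↥𝒴) :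
    (coneOff G 𝒴).dist (Sum.inl (φ a)) a ≤ 1 := by
  rcases a with x | U
  · rw [hφ.1]; simp
  · exact (SimpleGraph.dist_eq_one_iff_adj.mpr (adj_inl_inr.mpr (hφ.2 U))).le

/-- A point within `r` of `U` in `G` is within `r + 1` of the cone vertex `v_U` in the cone-off. -/
theorem dist_cone_le (hG : G.Connected) (hC : (coneOff G 𝒴).Connected) {r : ℝ} {U : 𝒴} {w u : V}
    (hu : u ∈ (U : Set V)) (h : (G.dist w u : ℝ) ≤ r) :
    ((coneOff G 𝒴).dist (Sum.inl w) (Sum.inr U) : ℝ) ≤ r + 1 := by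
  have h1 := triR hC (Sum.inl w) (Sum.inl u) (Sum.inr U)
  have h2 := dist_inl_leR (𝒴 := 𝒴) hG w u
  rw [SimpleGraph.dist_eq_one_iff_adj.mpr (adj_inl_inr.mpr hu)] at h1
  push_cast at h1
  linarith

/-- De-electrification of a single edge of the cone-off: a geodesic of `G` between the base points
of its ends stays close to one of the ends. -/
theorem edge_close (hG : G.Connected) (hC : (coneOff G 𝒴).Connected) {K : ℝ} (hK : 0 ≤ K)
    (hqc : ∀ Y ∈ 𝒴, BtwQC G K Y) {φ : V ⊕ ↥𝒴 → V} (hφ : IsBase φ) {a b : V ⊕ ↥𝒴}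
    (hab : (coneOff G 𝒴).dist a b = 1) {w : V} (hw : Btw G (φ a) (φ b) w) :
    ((coneOff G 𝒴).dist (Sum.inl w) a : ℝ) ≤ K + 1 ∨
      ((coneOff G 𝒴).dist (Sum.inl w) b : ℝ) ≤ K + 1 := by
  rw [SimpleGraph.dist_eq_one_iff_adj] at hab
  rcases a with x | U <;> rcases b with y | W
  · rw [hφ.1, hφ.1] at hw
    have h1 := SimpleGraph.dist_eq_one_iff_adj.mpr (adj_inl_inl.mp hab)
    have h2 : G.dist w x ≤ 1 := by
      unfold Btw at hw; rw [SimpleGraph.dist_comm]; omega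
    have h3 : ((G.dist w x : ℕ) : ℝ) ≤ 1 := by exact_mod_cast h2
    have h4 := dist_inl_leR (𝒴 := 𝒴) hG w x
    left; linarith
  · right
    rw [hφ.1] at hw
    obtain ⟨u, hu, hd⟩ := hqc W W.2 x (adj_inl_inr.mp hab) _ (hφ.2 W) w hw
    exact dist_cone_le hG hC hu hd
  · left
    rw [hφ.1] at hw
    obtain ⟨u, hu, hd⟩ := hqc U U.2 _ (hφ.2 U) y (adj_inl_inr.mp hab.symm) w hw
    exact dist_cone_le hG hC hu hd
  · exact absurd hab not_adj_inr_inr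

/-- A geodesic of `G` is logarithmically close to any path of the cone-off with the same
endpoints: subdivide the path dyadically and use slimness at each level. -/
theorem polygon (hG : G.Connected) (hC : (coneOff G 𝒴).Connected) {δ K : ℝ}
    (hK : 0 ≤ K) (hs : BtwSlim G δ)
    (hqc : ∀ Y ∈ 𝒴, BtwQC G K Y) {φ : V ⊕ ↥𝒴 → V} (hφ : IsBase φ) (f : ℕ → V ⊕ ↥𝒴) (k : ℕ) :
    ∀ i j : ℕ, i ≤ j → j ≤ i + 2 ^ k →
      (∀ m, i ≤ m → m < j → (coneOff G 𝒴).dist (f m) (f (m + 1)) = 1) →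
      ∀ v, Btw G (φ (f i)) (φ (f j)) v →
      ∃ m, i ≤ m ∧ m ≤ j ∧ ((coneOff G 𝒴).dist (Sum.inl v) (f m) : ℝ) ≤ k * δ + K + 1 := by
  induction k with
  | zero =>
    intro i j hij hj hf v hv
    rcases (by omega : j = i ∨ j = i + 1) with rfl | rfl
    · refine ⟨j, le_rfl, le_rfl, ?_⟩
      have h0 : G.dist v (φ (f j)) = 0 := by
        unfold Btw at hv; rw [SimpleGraph.dist_self] at hv; omega
      rw [hG.dist_eq_zero_iff] at h0
      have h1 : ((coneOff G 𝒴).dist (Sum.inl (φ (f j))) (f j) : ℝ) ≤ 1 := by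
        exact_mod_cast hφ.dist_le (f j)
      rw [h0]
      push_cast
      linarith
    · rcases edge_close hG hC hK hqc hφ (hf i le_rfl (by omega)) hv with h | h
      · exact ⟨i, le_rfl, by omega, by push_cast; linarith⟩
      · exact ⟨i + 1, by omega, le_rfl, by push_cast; linarith⟩
  | succ k ih =>
    intro i j hij hj hf v hv
    rw [pow_succ] at hj
    obtain ⟨c, hic, hcj, hc1, hc2⟩ : ∃ c, i ≤ c ∧ c ≤ j ∧ c ≤ i + 2 ^ k ∧ j ≤ c + 2 ^ k :=
      ⟨min j (i + 2 ^ k), by omega, by omega, by omega, by omega⟩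
    have fin : ∀ w, (G.dist v w : ℝ) ≤ δ → ∀ m,
        ((coneOff G 𝒴).dist (Sum.inl w) (f m) : ℝ) ≤ k * δ + K + 1 →
        ((coneOff G 𝒴).dist (Sum.inl v) (f m) : ℝ) ≤ ((k + 1 : ℕ) : ℝ) * δ + K + 1 := by
      intro w hw m hm
      have h1 := triR hC (Sum.inl v) (Sum.inl w) (f m)
      have h2 := dist_inl_leR (𝒴 := 𝒴) hG v w
      push_cast
      linarith
    obtain ⟨w, hw | hw, hd⟩ := hs _ _ (φ (f c)) v hv
    · obtain ⟨m, h1, h2, h3⟩ := ih i c hic hc1 (fun m h h' => hf m h (by omega)) w hw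
      exact ⟨m, h1, by omega, fin w hd m h3⟩
    · obtain ⟨m, h1, h2, h3⟩ := ih c j hcj hc2 (fun m h h' => hf m (by omega) h') w hw
      exact ⟨m, by omega, h2, fin w hd m h3⟩

theorem nat_ivt (g : ℕ → ℕ) (h0 : g 0 = 0) (D : ℕ) (N : ℕ)
    (hs : ∀ i < N, g (i + 1) ≤ g i + 1) (hN : D ≤ g N) : ∃ i ≤ N, g i = D := by
  induction N with
  | zero => exact ⟨0, le_rfl, by omega⟩
  | succ N ih =>
    by_cases h : D ≤ g N
    · obtain ⟨i, hi, e⟩ := ih (fun i hi => hs i (by omega)) h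
      exact ⟨i, by omega, e⟩
    · have := hs N (by omega)
      exact ⟨N + 1, le_rfl, by omega⟩

/-- `f` restricted to `[0, n]` is a geodesic of the graph `H`. -/
def IsGeo {W : Type*} (H : SimpleGraph W) (f : ℕ → W) (n : ℕ) : Prop :=
  ∀ i j, i ≤ j → j ≤ n → H.dist (f i) (f j) = j - i

theorem exists_at_dist (hG : G.Connected) (hC : (coneOff G 𝒴).Connected) (p x : V) (D : ℕ)
    (hD : D ≤ (coneOff G 𝒴).dist (Sum.inl x) (Sum.inl p)) :
    ∃ s, Btw G x p s ∧ (coneOff G 𝒴).dist (Sum.inl s) (Sum.inl p) = D := by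
  obtain ⟨f, h0, h1, h⟩ := exists_param hG p x
  obtain ⟨i, hi, e⟩ := nat_ivt
    (fun i => (coneOff G 𝒴).dist (Sum.inl (f i)) (Sum.inl p)) (by simp [h0]) D (G.dist p x)
    (by
      intro i hi
      have a := hC.dist_triangle (u := Sum.inl (f (i + 1))) (v := Sum.inl (f i)) (w := Sum.inl p)
      have b := dist_inl_le (𝒴 := 𝒴) hG (f i) (f (i + 1))
      rw [h i (i + 1) (by omega) (by omega)] at b
      rw [(coneOff G 𝒴).dist_comm (u := Sum.inl (f (i + 1))) (v := Sum.inl (f i))] at a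
      omega)
    (by rw [h1]; exact hD)
  refine ⟨f i, Btw.symm ?_, e⟩
  have a := h 0 i (by omega) hi
  have b := h i _ hi le_rfl
  rw [h0] at a
  rw [h1] at b
  unfold Btw
  omega

/-- A detour from the interval to the cone-off geodesic that stays far from `p`. Here `p` is at
distance at least `D` from the geodesic, and the interval points between the end `φ (f e)` and `p`
are at distance at most `D`; the detour starts at cone-off distance `2 * D`
from `p`, or at the end of the interval if there is no such point. -/
theorem detour (hG : G.Connected) (hC : (coneOff G 𝒴).Connected) {φ : V ⊕ ↥𝒴 → V}
    (hφ : IsBase φ) {f : ℕ → V ⊕ ↥𝒴} {n D e : ℕ} {p : V} (he : e ≤ n)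
    (hp : ∀ m ≤ n, D ≤ (coneOff G 𝒴).dist (Sum.inl p) (f m))
    (hmax : ∀ s, Btw G (φ (f e)) p s →
      ∃ m ≤ n, (coneOff G 𝒴).dist (Sum.inl s) (f m) ≤ D) :
    ∃ s, Btw G (φ (f e)) p s ∧ (coneOff G 𝒴).dist (Sum.inl s) (Sum.inl p) ≤ 2 * D ∧
      ∃ m ≤ n, (coneOff G 𝒴).dist (Sum.inl s) (f m) ≤ D + 1 ∧
        ∀ a, (coneOff G 𝒴).dist (Sum.inl s) a ≤ (coneOff G 𝒴).dist (Sum.inl s) (f m) →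
          D ≤ (coneOff G 𝒴).dist (Sum.inl p) a + 2 := by
  by_cases h : 2 * D ≤ (coneOff G 𝒴).dist (Sum.inl (φ (f e))) (Sum.inl p)
  · obtain ⟨s, hs, hd⟩ := exists_at_dist hG hC p _ _ h
    obtain ⟨m, hm, hm'⟩ := hmax s hs
    refine ⟨s, hs, hd.le, m, hm, by omega, fun a ha => ?_⟩
    have := hC.dist_triangle (u := Sum.inl s) (v := a) (w := Sum.inl p)
    rw [(coneOff G 𝒴).dist_comm (u := a)] at this
    omega
  · have h1 := hφ.dist_le (G := G) (f e)
    refine ⟨φ (f e), by unfold Btw; simp, by omega, e, he, by omega, fun a ha => ?_⟩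
    have h2 := hC.dist_triangle (u := Sum.inl p) (v := a) (w := f e)
    have h3 := hC.dist_triangle (u := a) (v := Sum.inl (φ (f e))) (w := f e)
    rw [(coneOff G 𝒴).dist_comm (u := a) (v := Sum.inl (φ (f e)))] at h3
    have := hp e he
    omega

/-- The logarithmic bound of `polygon` for some cone-off geodesic from `s` to `b`; the vertex `a`
near `v` is no farther from `s` than `b` is. -/
theorem polygon_geo (hG : G.Connected) (hC : (coneOff G 𝒴).Connected) {δ K : ℝ}
    (hK : 0 ≤ K) (hs : BtwSlim G δ)
    (hqc : ∀ Y ∈ 𝒴, BtwQC G K Y) {φ : V ⊕ ↥𝒴 → V} (hφ : IsBase φ) (k : ℕ) {s : V}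
    {b : V ⊕ ↥𝒴} (hk : (coneOff G 𝒴).dist (Sum.inl s) b ≤ 2 ^ k) {v : V}
    (hv : Btw G s (φ b) v) :
    ∃ a, (coneOff G 𝒴).dist (Sum.inl s) a ≤ (coneOff G 𝒴).dist (Sum.inl s) b ∧
      ((coneOff G 𝒴).dist (Sum.inl v) a : ℝ) ≤ k * δ + K + 1 := by
  obtain ⟨f, h0, h1, h⟩ := exists_param hC (Sum.inl s) b
  obtain ⟨m, -, hm, hd⟩ := polygon hG hC hK hs hqc hφ f k 0
    ((coneOff G 𝒴).dist (Sum.inl s) b) (Nat.zero_le _) (by omega)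
    (fun m _ hm => by rw [h m (m + 1) (by omega) (by omega)]; omega) v
    (by rw [h0, h1, hφ.1]; exact hv)
  refine ⟨f m, ?_, hd⟩
  have := h 0 m (by omega) hm
  rw [h0] at this
  omega

/-- The logarithmic bound along a subsegment of a cone-off geodesic, with either orientation. -/
theorem polygon_sub (hG : G.Connected) (hC : (coneOff G 𝒴).Connected) {δ K : ℝ}
    (hK : 0 ≤ K) (hs : BtwSlim G δ)
    (hqc : ∀ Y ∈ 𝒴, BtwQC G K Y) {φ : V ⊕ ↥𝒴 → V} (hφ : IsBase φ) (k : ℕ)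
    {f : ℕ → V ⊕ ↥𝒴} {n : ℕ} (hf : IsGeo (coneOff G 𝒴) f n) {i j : ℕ} (hi : i ≤ n) (hj : j ≤ n)
    (hk : (coneOff G 𝒴).dist (f i) (f j) ≤ 2 ^ k) {v : V} (hv : Btw G (φ (f i)) (φ (f j)) v) :
    ∃ m ≤ n, ((coneOff G 𝒴).dist (Sum.inl v) (f m) : ℝ) ≤ k * δ + K + 1 := by
  have key : ∀ i j, i ≤ j → j ≤ n → (coneOff G 𝒴).dist (f i) (f j) ≤ 2 ^ k →
      Btw G (φ (f i)) (φ (f j)) v →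
      ∃ m ≤ n, ((coneOff G 𝒴).dist (Sum.inl v) (f m) : ℝ) ≤ k * δ + K + 1 := by
    intro i j hij hj hk hv
    rw [hf i j hij hj] at hk
    obtain ⟨m, -, hm, hd⟩ := polygon hG hC hK hs hqc hφ f k i j hij (by omega)
      (fun m _ hm => by rw [hf m (m + 1) (by omega) (by omega)]; omega) v hv
    exact ⟨m, by omega, hd⟩
  rcases le_total i j with h | h
  · exact key i j h hj hk hv
  · exact key j i h hi (by rw [SimpleGraph.dist_comm]; exact hk) hv.symm

/-- If the maximal distance `D` from the interval to the cone-off geodesic is attained at `p`,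
then `D` is at most logarithmic in `D`. -/
theorem max_bound (hG : G.Connected) (hC : (coneOff G 𝒴).Connected) {δ K : ℝ} (hδ : 0 ≤ δ)
    (hK : 0 ≤ K) (hs : BtwSlim G δ)
    (hqc : ∀ Y ∈ 𝒴, BtwQC G K Y) {φ : V ⊕ ↥𝒴 → V} (hφ : IsBase φ) (k : ℕ)
    {f : ℕ → V ⊕ ↥𝒴} {n : ℕ} (hf : IsGeo (coneOff G 𝒴) f n) {D : ℕ} (hk : 6 * D + 2 ≤ 2 ^ k)
    {p : V} (hpb : Btw G (φ (f 0)) (φ (f n)) p)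
    (hp : ∀ m ≤ n, D ≤ (coneOff G 𝒴).dist (Sum.inl p) (f m))
    (hmax : ∀ s, Btw G (φ (f 0)) (φ (f n)) s →
      ∃ m ≤ n, (coneOff G 𝒴).dist (Sum.inl s) (f m) ≤ D) :
    (D : ℝ) ≤ k * δ + 2 * δ + K + 3 := by
  have hpb' := hpb.symm
  obtain ⟨s, hs1, hs2, i, hi, hs3, hs4⟩ := detour hG hC hφ (Nat.zero_le n) hp (fun s hs => by
    apply hmax
    unfold Btw at *
    have := hG.dist_triangle (u := φ (f 0)) (v := s) (w := φ (f n))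
    have := hG.dist_triangle (u := s) (v := p) (w := φ (f n))
    omega)
  obtain ⟨t, ht1, ht2, j, hj, ht3, ht4⟩ := detour hG hC hφ (le_refl n) hp (fun s hs => by
    apply hmax
    apply Btw.symm
    unfold Btw at *
    have := hG.dist_triangle (u := φ (f n)) (v := s) (w := φ (f 0))
    have := hG.dist_triangle (u := s) (v := p) (w := φ (f 0))
    omega)
  have hst : Btw G s t p := by
    have ht1' := ht1.symm
    unfold Btw at *
    have h1 := hG.dist_triangle (u := φ (f 0)) (v := s) (w := φ (f n))
    have h2 := hG.dist_triangle (u := s) (v := t) (w := φ (f n))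
    have h3 := hG.dist_triangle (u := s) (v := p) (w := t)
    omega
  have hij : (coneOff G 𝒴).dist (f i) (f j) ≤ 2 ^ k := by
    have h1 := hC.dist_triangle (u := f i) (v := Sum.inl s) (w := f j)
    have h2 := hC.dist_triangle (u := Sum.inl s) (v := Sum.inl t) (w := f j)
    have h3 := hC.dist_triangle (u := Sum.inl s) (v := Sum.inl p) (w := Sum.inl t)
    rw [(coneOff G 𝒴).dist_comm (u := f i) (v := Sum.inl s)] at h1
    rw [(coneOff G 𝒴).dist_comm (u := Sum.inl p) (v := Sum.inl t)] at h3
    omega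
  have fin : ∀ w a, (G.dist p w : ℝ) ≤ 2 * δ →
      ((coneOff G 𝒴).dist (Sum.inl w) a : ℝ) ≤ k * δ + K + 1 →
      D ≤ (coneOff G 𝒴).dist (Sum.inl p) a + 2 →
      (D : ℝ) ≤ k * δ + 2 * δ + K + 3 := by
    intro w a h1 h2 h3
    have h4 := triR hC (Sum.inl p) (Sum.inl w) a
    have h5 := dist_inl_leR (𝒴 := 𝒴) hG p w
    have h6 : (D : ℝ) ≤ (coneOff G 𝒴).dist (Sum.inl p) a + 2 := by exact_mod_cast h3
    linarith
  obtain ⟨w, hw | hw, hd⟩ := hs s t (φ (f i)) p hst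
  · obtain ⟨a, ha, hwa⟩ := polygon_geo hG hC hK hs hqc hφ k (by omega) hw
    exact fin w a (by linarith) hwa (hs4 a ha)
  · obtain ⟨w', hw', hd'⟩ := hs _ _ (φ (f j)) w hw
    have hd2 := triR hG p w w'
    rcases hw' with hw' | hw'
    · obtain ⟨m, hm, hwm⟩ := polygon_sub hG hC hK hs hqc hφ k hf hi hj hij hw'
      have := hp m hm
      exact fin w' (f m) (by linarith) hwm (by omega)
    · obtain ⟨a, ha, hwa⟩ := polygon_geo hG hC hK hs hqc hφ k (by omega) hw'.symm
      exact fin w' a (by linarith) hwa (ht4 a ha)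

end ConeOff

theorem exists_exp_bound (A B : ℝ) : ∃ k0 : ℕ, ∀ k : ℕ, (2 : ℝ) ^ k ≤ A * k + B → k ≤ k0 := by
  have h1 : Filter.Tendsto (fun k : ℕ => (k : ℝ) ^ 1 / (2 : ℝ) ^ k) Filter.atTop (nhds 0) :=
    tendsto_pow_const_div_const_pow_of_one_lt 1 (by norm_num)
  have h2 : Filter.Tendsto (fun k : ℕ => (k : ℝ) ^ 0 / (2 : ℝ) ^ k) Filter.atTop (nhds 0) :=
    tendsto_pow_const_div_const_pow_of_one_lt 0 (by norm_num)
  have h3 := (h1.const_mul A).add (h2.const_mul B)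
  simp only [mul_zero, add_zero] at h3
  obtain ⟨k0, hk0⟩ := Filter.eventually_atTop.mp (h3.eventually_lt_const one_pos)
  refine ⟨k0, fun k hk => ?_⟩
  by_contra hcon
  have h4 := hk0 k (by omega)
  have h5 : A * ((k : ℝ) ^ 1 / (2 : ℝ) ^ k) + B * ((k : ℝ) ^ 0 / (2 : ℝ) ^ k)
      = (A * k + B) / 2 ^ k := by
    rw [pow_one, pow_zero]; ring
  rw [h5, div_lt_one (by positivity)] at h4
  linarith

/-- The constant `R` of `geodesic_close`: a number at most logarithmic in itself is bounded. -/
theorem exists_R (δ K : ℝ) (hδ : 0 ≤ δ) (hK : 0 ≤ K) : ∃ R : ℝ, 0 ≤ R ∧ ∀ D : ℕ,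
    (∀ k : ℕ, 6 * D + 2 ≤ 2 ^ k → (D : ℝ) ≤ k * δ + 2 * δ + K + 3) → (D : ℝ) ≤ R := by
  obtain ⟨k0, hk0⟩ := exists_exp_bound (12 * δ) (12 * (2 * δ + K + 3) + 4)
  refine ⟨k0 * δ + 2 * δ + K + 3, by positivity, fun D hD => ?_⟩
  have h1 : 6 * D + 2 ≤ 2 ^ Nat.clog 2 (6 * D + 2) := Nat.le_pow_clog (by norm_num) _
  have h2 : 2 ^ (Nat.clog 2 (6 * D + 2) - 1) < 6 * D + 2 :=
    Nat.pow_pred_clog_lt_self (b := 2) (by norm_num) (x := 6 * D + 2) (by omega)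
  have h3 := hD _ h1
  have hpos : 0 < Nat.clog 2 (6 * D + 2) := Nat.clog_pos (by norm_num) (by omega)
  obtain ⟨k, hk⟩ : ∃ k, Nat.clog 2 (6 * D + 2) = k + 1 := ⟨_, (Nat.succ_pred_eq_of_pos hpos).symm⟩
  rw [hk] at h1 h2 h3
  have h4 : 2 ^ (k + 1) ≤ 12 * D + 4 := by
    rw [pow_succ]; simp only [Nat.add_sub_cancel] at h2; omega
  have h5 : (2 : ℝ) ^ (k + 1) ≤ 12 * D + 4 := by exact_mod_cast h4
  have h6 := hk0 (k + 1) (by linarith)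
  have h7 : ((k + 1 : ℕ) : ℝ) ≤ k0 := by exact_mod_cast h6
  have h8 := mul_le_mul_of_nonneg_right h7 hδ
  linarith

/-! ### Comparison of geodesics and the bound -/

section Main

variable {V : Type*} {G : SimpleGraph V} {𝒴 : Set (Set V)}

/-- Geodesics of `G` are uniformly close, in the cone-off, to geodesics of the cone-off. -/
theorem geodesic_close (hG : G.Connected) (hC : (coneOff G 𝒴).Connected) {δ K R : ℝ} (hδ : 0 ≤ δ)
    (hK : 0 ≤ K) (hR : ∀ D : ℕ,
      (∀ k : ℕ, 6 * D + 2 ≤ 2 ^ k → (D : ℝ) ≤ k * δ + 2 * δ + K + 3) → (D : ℝ) ≤ R)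
    (hs : BtwSlim G δ)
    (hqc : ∀ Y ∈ 𝒴, BtwQC G K Y) {φ : V ⊕ ↥𝒴 → V} (hφ : IsBase φ)
    {f : ℕ → V ⊕ ↥𝒴} {n : ℕ} (hf : IsGeo (coneOff G 𝒴) f n)
    {p : V} (hpb : Btw G (φ (f 0)) (φ (f n)) p) :
    ∃ m ≤ n, ((coneOff G 𝒴).dist (Sum.inl p) (f m) : ℝ) ≤ R := by
  classical
  -- `P D`: some interval point is at distance at least `D` from every vertex of the geodesic.
  let P : ℕ → Prop := fun D => ∃ p, Btw G (φ (f 0)) (φ (f n)) p ∧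
    ∀ m ≤ n, D ≤ (coneOff G 𝒴).dist (Sum.inl p) (f m)
  have hP0 : P 0 := ⟨p, hpb, fun _ _ => Nat.zero_le _⟩
  have hbd : ∀ D, P D → D ≤ G.dist (φ (f 0)) (φ (f n)) + 1 := by
    rintro D ⟨p, hp, h⟩
    have h1 := h 0 (Nat.zero_le _)
    have h2 := hC.dist_triangle (u := Sum.inl p) (v := Sum.inl (φ (f 0))) (w := f 0)
    have h3 := hφ.dist_le (G := G) (f 0)
    have h4 := dist_inl_le (𝒴 := 𝒴) hG p (φ (f 0))
    unfold Btw at hp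
    rw [G.dist_comm] at h4
    omega
  obtain ⟨D, hD, hDmax⟩ : ∃ D, P D ∧ ¬ P (D + 1) := by
    by_contra hcon
    push Not at hcon
    have hall : ∀ D, P D := fun D => Nat.rec hP0 (fun D ih => hcon D ih) D
    have := hbd _ (hall (G.dist (φ (f 0)) (φ (f n)) + 2))
    omega
  have hmax : ∀ s, Btw G (φ (f 0)) (φ (f n)) s →
      ∃ m ≤ n, (coneOff G 𝒴).dist (Sum.inl s) (f m) ≤ D := by
    intro s hs
    by_contra hcon
    push Not at hcon
    exact hDmax ⟨s, hs, fun m hm => hcon m hm⟩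
  obtain ⟨p', hp', hpD⟩ := hD
  have hDR := hR D fun k hk => max_bound hG hC hδ hK hs hqc hφ k hf hk hp' hpD hmax
  obtain ⟨m, hm, hd⟩ := hmax p hpb
  refine ⟨m, hm, le_trans ?_ hDR⟩
  exact_mod_cast hd

/-- A cone-off geodesic that stays away from the cone vertex of `Y` has endpoints whose
projections to `Y` are close, with bound independent of the separation constant. -/
theorem far_bound (hG : G.Connected) (hC : (coneOff G 𝒴).Connected) {δ K R : ℝ} (hδ : 0 ≤ δ)
    (hK : 0 ≤ K) (hR : ∀ D : ℕ,
      (∀ k : ℕ, 6 * D + 2 ≤ 2 ^ k → (D : ℝ) ≤ k * δ + 2 * δ + K + 3) → (D : ℝ) ≤ R)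
    (hs : BtwSlim G δ)
    (hqc : ∀ Y ∈ 𝒴, BtwQC G K Y) {φ : V ⊕ ↥𝒴 → V} (hφ : IsBase φ) (Y : 𝒴)
    {f : ℕ → V ⊕ ↥𝒴} {n : ℕ} (hf : IsGeo (coneOff G 𝒴) f n)
    (hfar : ∀ m ≤ n, R + 2 * δ + K + 1 < (coneOff G 𝒴).dist (f m) (Sum.inr Y)) {p q : V}
    (hp : p ∈ projSet G Y (φ (f 0))) (hq : q ∈ projSet G Y (φ (f n))) :
    (G.dist p q : ℝ) ≤ 2 * (4 * δ + K) + 2 := by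
  by_contra hcon
  push Not at hcon
  obtain ⟨w, hw, u, hu, hd⟩ := close_of_far_proj hG hδ hK hs (hqc Y Y.2) hp hq hcon
  obtain ⟨m, hm, hmR⟩ := geodesic_close hG hC hδ hK hR hs hqc hφ hf hw
  have h1 := dist_cone_le hG hC (U := Y) hu hd
  have h2 := triR hC (f m) (Sum.inl w) (Sum.inr Y)
  rw [commR _ (f m) (Sum.inl w)] at h2
  have := hfar m hm
  linarith

theorem IsBase.proj_subset {φ : V ⊕ ↥𝒴 → V} (hφ : IsBase φ) (Y : Set V) (a : V ⊕ ↥𝒴) :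
    projSet G Y (φ a) ⊆ projHat G 𝒴 Y a := by
  intro p hp
  rcases a with x | U
  · rw [hφ.1] at hp; exact hp
  · exact Set.mem_biUnion (hφ.2 U) hp

/-- One step of a path in the cone-off avoiding `v_Y` moves the projection a bounded amount. -/
theorem step_bound (hG : G.Connected) {δ K M0 : ℝ} (hδ : 0 ≤ δ)
    (hK : 0 ≤ K) (hM : 0 ≤ M0) (hs : BtwSlim G δ)
    (hqc : ∀ Y ∈ 𝒴, BtwQC G K Y) (Y : 𝒴)
    (hsep : ∀ U ∈ 𝒴, (Y : Set V) ≠ U → ∀ a ∈ (Y : Set V) ∩ nbhd G (2 * K + 2 * δ) U,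
      ∀ b ∈ (Y : Set V) ∩ nbhd G (2 * K + 2 * δ) U, (G.dist a b : ℝ) ≤ M0)
    {a b : V ⊕ ↥𝒴} (ha : a ≠ Sum.inr Y) (hb : b ≠ Sum.inr Y)
    (hab : a = b ∨ (coneOff G 𝒴).Adj a b) {p q : V}
    (hp : p ∈ projHat G 𝒴 Y a) (hq : q ∈ projHat G 𝒴 Y b) :
    (G.dist p q : ℝ) ≤ M0 + 2 * K + 2 * (4 * δ + K) + 3 := by
  have hcone : ∀ U : 𝒴, (Sum.inr U : V ⊕ ↥𝒴) ≠ Sum.inr Y → ∀ x ∈ (U : Set V),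
      ∀ y ∈ (U : Set V), p ∈ projSet G Y x → q ∈ projSet G Y y →
      (G.dist p q : ℝ) ≤ M0 + 2 * K + 2 * (4 * δ + K) + 3 := by
    intro U hU x hx y hy hp hq
    have hne : (Y : Set V) ≠ U := fun e => hU (by rw [Subtype.ext e])
    exact proj_cone hG hδ hK hM hs (hqc Y Y.2) (hqc U U.2) (hsep U U.2 hne) hx hy hp hq
  have hadj : ∀ x y, G.dist x y ≤ 1 → p ∈ projSet G Y x → q ∈ projSet G Y y →
      (G.dist p q : ℝ) ≤ M0 + 2 * K + 2 * (4 * δ + K) + 3 := by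
    intro x y hxy hp hq
    have := proj_adj hG hδ hK hs (hqc Y Y.2) hxy hp hq
    linarith
  rcases a with x | U <;> rcases b with y | W
  · rcases hab with e | h
    · exact hadj x y (by rw [Sum.inl_injective e]; simp) hp hq
    · exact hadj x y (SimpleGraph.dist_eq_one_iff_adj.mpr (adj_inl_inl.mp h)).le hp hq
  · rcases hab with e | h
    · cases e
    · obtain ⟨y, hy, hq⟩ := Set.mem_iUnion₂.mp hq
      exact hcone W hb x (adj_inl_inr.mp h) y hy hp hq
  · rcases hab with e | h
    · cases e
    · obtain ⟨x, hx, hp⟩ := Set.mem_iUnion₂.mp hp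
      exact hcone U ha x hx y (adj_inl_inr.mp h.symm) hp hq
  · rcases hab with e | h
    · obtain rfl := Sum.inr_injective e
      obtain ⟨x, hx, hp⟩ := Set.mem_iUnion₂.mp hp
      obtain ⟨y, hy, hq⟩ := Set.mem_iUnion₂.mp hq
      exact hcone U ha x hx y hy hp hq
    · exact absurd h not_adj_inr_inr

/-- Iterating a one-step bound `L` along a path `f` whose vertices carry nonempty sets. -/
theorem chain_bound (hG : G.Connected) {W : Type*} (S : W → Set V) (f : ℕ → W) {L : ℝ} {n : ℕ}
    (hne : ∀ i, (S (f i)).Nonempty)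
    (h0 : ∀ i ≤ n, ∀ p ∈ S (f i), ∀ q ∈ S (f i), (G.dist p q : ℝ) ≤ L)
    (h1 : ∀ i < n, ∀ p ∈ S (f i), ∀ q ∈ S (f (i + 1)), (G.dist p q : ℝ) ≤ L)
    (i k : ℕ) : i + k ≤ n → ∀ p ∈ S (f i), ∀ q ∈ S (f (i + k)), (G.dist p q : ℝ) ≤ (k + 1) * L := by
  induction k with
  | zero =>
    intro h p hp q hq
    have := h0 i (by omega) p hp q hq
    push_cast
    linarith
  | succ k ih =>
    intro h p hp q hq
    obtain ⟨r, hr⟩ := hne (i + k)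
    have a := ih (by omega) p hp r hr
    have b := h1 (i + k) (by omega) r hr q hq
    have c := triR hG p r q
    push_cast
    linarith

theorem main_bound (hG : G.Connected) {δ K M0 R : ℝ} (hδ : 0 ≤ δ)
    (hK : 0 ≤ K) (hM : 0 ≤ M0) (hR0 : 0 ≤ R) (hR : ∀ D : ℕ,
      (∀ k : ℕ, 6 * D + 2 ≤ 2 ^ k → (D : ℝ) ≤ k * δ + 2 * δ + K + 3) → (D : ℝ) ≤ R)
    (hs : BtwSlim G δ) (hne : ∀ Y ∈ 𝒴, Y.Nonempty)
    (hqc : ∀ Y ∈ 𝒴, BtwQC G K Y) (Y : 𝒴)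
    (hsep : ∀ U ∈ 𝒴, (Y : Set V) ≠ U → ∀ a ∈ (Y : Set V) ∩ nbhd G (2 * K + 2 * δ) U,
      ∀ b ∈ (Y : Set V) ∩ nbhd G (2 * K + 2 * δ) U, (G.dist a b : ℝ) ≤ M0)
    {f : ℕ → V ⊕ ↥𝒴} {n : ℕ} (hf : IsGeo (coneOff G 𝒴) f n)
    (hfY : ∀ m ≤ n, f m ≠ Sum.inr Y) {p q : V}
    (hp : p ∈ projHat G 𝒴 Y (f 0)) (hq : q ∈ projHat G 𝒴 Y (f n)) :
    (G.dist p q : ℝ) ≤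
      (2 * (R + 2 * δ + K + 1) + 9) * (M0 + 2 * K + 2 * (4 * δ + K) + 3) := by
  classical
  have hC := coneOff_connected hG hne
  obtain ⟨φ, hφ⟩ := exists_isBase hne
  have hYne := hne Y Y.2
  set L := M0 + 2 * K + 2 * (4 * δ + K) + 3 with hL
  set R1 := R + 2 * δ + K + 1 with hR1
  have hL0 : 0 ≤ L := by positivity
  have hR10 : 0 ≤ R1 := by positivity
  have hne' : ∀ a : V ⊕ ↥𝒴, (projHat G 𝒴 Y a).Nonempty := fun a =>
    (projSet_nonempty G hYne (φ a)).mono (hφ.proj_subset Y a)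
  have h0 : ∀ i ≤ n, ∀ p ∈ projHat G 𝒴 Y (f i), ∀ q ∈ projHat G 𝒴 Y (f i),
      (G.dist p q : ℝ) ≤ L := fun i hi p hp q hq =>
    step_bound hG hδ hK hM hs hqc Y hsep (hfY i hi) (hfY i hi) (Or.inl rfl) hp hq
  have h1 : ∀ i < n, ∀ p ∈ projHat G 𝒴 Y (f i), ∀ q ∈ projHat G 𝒴 Y (f (i + 1)),
      (G.dist p q : ℝ) ≤ L := fun i hi p hp q hq =>
    step_bound hG hδ hK hM hs hqc Y hsep (hfY i hi.le) (hfY (i + 1) hi)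
      (Or.inr (SimpleGraph.dist_eq_one_iff_adj.mp
        (by rw [hf i (i + 1) (by omega) hi]; omega))) hp hq
  have hchain := chain_bound hG (projHat G 𝒴 Y) f (n := n) (fun i => hne' (f i)) h0 h1
  -- A far subsegment moves the projection by at most `3 * L`.
  have hfarseg : ∀ i j, i ≤ j → j ≤ n →
      (∀ m, i ≤ m → m ≤ j → R1 < (coneOff G 𝒴).dist (f m) (Sum.inr Y)) →
      ∀ p ∈ projHat G 𝒴 Y (f i), ∀ q ∈ projHat G 𝒴 Y (f j), (G.dist p q : ℝ) ≤ 3 * L := by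
    intro i j hij hj hfar p hp q hq
    obtain ⟨p', hp'⟩ := projSet_nonempty G hYne (φ (f i))
    obtain ⟨q', hq'⟩ := projSet_nonempty G hYne (φ (f j))
    have a := h0 i (by omega) p hp p' (hφ.proj_subset Y _ hp')
    have b := h0 j hj q' (hφ.proj_subset Y _ hq') q hq
    have c := far_bound hG hC hδ hK hR hs hqc hφ Y (f := fun m => f (i + m)) (n := j - i)
      (fun a b hab hb => by
        exact (hf (i + a) (i + b) (by omega) (by omega)).trans (by omega))
      (fun m hm => hfar (i + m) (by omega) (by omega)) (p := p') (q := q') hp'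
      (by rw [show i + (j - i) = j by omega]; exact hq')
    have d := triR hG p p' q
    have e := triR hG p' q' q
    linarith
  by_cases hnear : ∃ m, m ≤ n ∧ ((coneOff G 𝒴).dist (f m) (Sum.inr Y) : ℝ) ≤ R1
  swap
  · push Not at hnear
    have := hfarseg 0 n (Nat.zero_le _) le_rfl (fun m _ hm => hnear m hm) p hp q hq
    nlinarith
  -- `m₁` and `m₂` are the first and last times at which the geodesic is near `v_Y`.
  obtain ⟨m₁, ⟨hm1, hm1'⟩, hfirst⟩ : ∃ m, (m ≤ n ∧
      ((coneOff G 𝒴).dist (f m) (Sum.inr Y) : ℝ) ≤ R1) ∧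
      ∀ m' < m, R1 < (coneOff G 𝒴).dist (f m') (Sum.inr Y) := by
    refine ⟨Nat.find hnear, Nat.find_spec hnear, fun m' hm' => ?_⟩
    have h := Nat.find_min hnear hm'
    have h' := (Nat.find_spec hnear).1
    by_contra hcon
    exact h ⟨by omega, not_lt.mp hcon⟩
  obtain ⟨m₂, hm12, hm2, hm2', hlast⟩ : ∃ m, m₁ ≤ m ∧ m ≤ n ∧
      ((coneOff G 𝒴).dist (f m) (Sum.inr Y) : ℝ) ≤ R1 ∧
      ∀ m', m < m' → m' ≤ n → R1 < (coneOff G 𝒴).dist (f m') (Sum.inr Y) := by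
    let P : ℕ → Prop := fun m => ((coneOff G 𝒴).dist (f m) (Sum.inr Y) : ℝ) ≤ R1
    refine ⟨Nat.findGreatest P n, Nat.le_findGreatest hm1 hm1', Nat.findGreatest_le n,
      Nat.findGreatest_spec (P := P) hm1 hm1', fun m' h h' => ?_⟩
    exact not_le.mp (Nat.findGreatest_is_greatest (P := P) h h')
  obtain ⟨r₁, hr1⟩ := hne' (f m₁)
  obtain ⟨r₂, hr2⟩ := hne' (f m₂)
  have A : (G.dist p r₁ : ℝ) ≤ 4 * L := by
    rcases Nat.eq_zero_or_pos m₁ with e | hpos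
    · rw [e] at hr1
      have := h0 0 (Nat.zero_le _) p hp r₁ hr1
      linarith
    · obtain ⟨m, rfl⟩ : ∃ m, m₁ = m + 1 := ⟨m₁ - 1, by omega⟩
      obtain ⟨r, hr⟩ := hne' (f m)
      have a := hfarseg 0 m (Nat.zero_le _) (by omega) (fun m' _ h => hfirst m' (by omega))
        p hp r hr
      have b := h1 m (by omega) r hr r₁ hr1
      have c := triR hG p r r₁
      linarith
  have B : (G.dist r₂ q : ℝ) ≤ 4 * L := by
    rcases hm2.eq_or_lt with e | hlt
    · rw [e] at hr2
      have := h0 n le_rfl r₂ hr2 q hq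
      linarith
    · obtain ⟨r, hr⟩ := hne' (f (m₂ + 1))
      have a := hfarseg (m₂ + 1) n (by omega) le_rfl (fun m' h h' => hlast m' (by omega) h')
        r hr q hq
      have b := h1 m₂ hlt r₂ hr2 r hr
      have c := triR hG r₂ r q
      linarith
  have E : (G.dist r₁ r₂ : ℝ) ≤ (2 * R1 + 1) * L := by
    have a := hchain m₁ (m₂ - m₁) (by omega) r₁ hr1 r₂
      (by rw [show m₁ + (m₂ - m₁) = m₂ by omega]; exact hr2)
    have b := triR hC (f m₁) (Sum.inr Y) (f m₂)
    rw [hf m₁ m₂ hm12 hm2, commR _ (Sum.inr Y) (f m₂)] at b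
    refine a.trans (mul_le_mul_of_nonneg_right ?_ hL0)
    linarith
  have a := triR hG p r₁ q
  have b := triR hG r₁ r₂ q
  linarith

end Main

theorem gdiam_le_iff {V : Type*} {G : SimpleGraph V} {S : Set V} {C : ℝ} (hC : 0 ≤ C) :
    gdiam G S ≤ ENNReal.ofReal C ↔ ∀ a ∈ S, ∀ b ∈ S, (G.dist a b : ℝ) ≤ C := by
  simp only [gdiam, iSup_le_iff]
  refine forall₂_congr fun a _ => forall₂_congr fun b _ => ?_
  rw [← ENNReal.ofReal_natCast, ENNReal.ofReal_le_ofReal_iff hC]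

end StrongBGI

universe u

/-- Strong bounded geodesic image: for an `M0`-geometrically separated family `𝒴` of
nonempty `K`-quasiconvex subsets of a `δ`-hyperbolic graph there is a constant `C`,
depending only on `δ, K, M0` and bounded above by a linear function of `M0` with
coefficients depending only on `δ` and `K`, such that for `Y ∈ 𝒴` and
`x, y ∈ X̂ − {v_Y}`, if some geodesic of the cone-off `X̂` from `x` to `y` does not pass
through the cone vertex `v_Y`, then `d_Y^π(x,y) ≤ C`. -/
theorem strong_bounded_geodesic_image (δ K : ℝ) (hδ : 0 ≤ δ) (hK : 0 ≤ K) :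
    ∃ c₁ c₂ : ℝ, 0 ≤ c₁ ∧ 0 ≤ c₂ ∧ ∀ M0 : ℝ, 0 ≤ M0 →
      ∃ C : ℝ, C ≤ c₁ * M0 + c₂ ∧
        ∀ (V : Type u) (G : SimpleGraph V), G.Connected → SlimTrianglesG G δ →
          ∀ 𝒴 : Set (Set V),
            (∀ Y ∈ 𝒴, Y.Nonempty) → (∀ Y ∈ 𝒴, QuasiconvexIn G K Y) →
            (∀ Y ∈ 𝒴, ∀ Y' ∈ 𝒴, Y ≠ Y' →
              gdiam G (Y ∩ nbhd G (2 * K + 2 * δ) Y') ≤ ENNReal.ofReal M0) →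
            ∀ (Y : Set V) (hY : Y ∈ 𝒴), ∀ a b : V ⊕ ↥𝒴,
              a ≠ Sum.inr ⟨Y, hY⟩ → b ≠ Sum.inr ⟨Y, hY⟩ →
              ∀ γ : (coneOff G 𝒴).Walk a b,
                γ.length = (coneOff G 𝒴).dist a b →
                Sum.inr ⟨Y, hY⟩ ∉ γ.support →
                gdiam G (projHat G 𝒴 Y a ∪ projHat G 𝒴 Y b) ≤ ENNReal.ofReal C := by
  obtain ⟨R, hR0, hR⟩ := StrongBGI.exists_R δ K hδ hK
  have hA : 0 ≤ 2 * (R + 2 * δ + K + 1) + 9 := by positivity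
  refine ⟨2 * (R + 2 * δ + K + 1) + 9,
    (2 * (R + 2 * δ + K + 1) + 9) * (2 * K + 2 * (4 * δ + K) + 3), hA, by positivity,
    fun M0 hM => ⟨(2 * (R + 2 * δ + K + 1) + 9) * (M0 + 2 * K + 2 * (4 * δ + K) + 3),
      le_of_eq (by ring), ?_⟩⟩
  intro V G hG hslim 𝒴 hne hqc hsep Y hY a b ha hb γ hγ hγY
  have hC := StrongBGI.coneOff_connected hG hne
  have hs := StrongBGI.btwSlim_of_slim hG hslim
  have hq : ∀ Y ∈ 𝒴, StrongBGI.BtwQC G K Y := fun Y hY => StrongBGI.btwQC_of_qc hG (hqc Y hY)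
  have hsep' : ∀ U ∈ 𝒴, Y ≠ U → ∀ a ∈ Y ∩ nbhd G (2 * K + 2 * δ) U,
      ∀ b ∈ Y ∩ nbhd G (2 * K + 2 * δ) U, (G.dist a b : ℝ) ≤ M0 := fun U hU hYU =>
    (StrongBGI.gdiam_le_iff hM).mp (hsep Y hY U hU hYU)
  have hself : ∀ c : V ⊕ ↥𝒴, c ≠ Sum.inr ⟨Y, hY⟩ → ∀ p ∈ projHat G 𝒴 Y c,
      ∀ q ∈ projHat G 𝒴 Y c, (G.dist p q : ℝ) ≤
        (2 * (R + 2 * δ + K + 1) + 9) * (M0 + 2 * K + 2 * (4 * δ + K) + 3) := by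
    intro c hc p hp q hq'
    have h := StrongBGI.step_bound hG hδ hK hM hs hq ⟨Y, hY⟩ hsep' hc hc (Or.inl rfl) hp hq'
    refine h.trans (le_mul_of_one_le_left (by positivity) ?_)
    linarith
  have hcross : ∀ p ∈ projHat G 𝒴 Y a, ∀ q ∈ projHat G 𝒴 Y b, (G.dist p q : ℝ) ≤
        (2 * (R + 2 * δ + K + 1) + 9) * (M0 + 2 * K + 2 * (4 * δ + K) + 3) := by
    intro p hp q hq'
    refine StrongBGI.main_bound hG hδ hK hM hR0 hR hs hne hq ⟨Y, hY⟩ hsep'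
      (f := γ.getVert) (n := γ.length)
      (fun i j hij hj => StrongBGI.dist_getVert hC γ hγ hij hj) ?_ ?_ ?_
    · intro m hm e
      exact hγY (e ▸ γ.getVert_mem_support m)
    · rw [SimpleGraph.Walk.getVert_zero]; exact hp
    · rw [SimpleGraph.Walk.getVert_length]; exact hq'
  rw [StrongBGI.gdiam_le_iff (by positivity)]
  rintro p (hp | hp) q (hq' | hq')
  · exact hself a ha p hp q hq'
  · exact hcross p hp q hq'
  · rw [SimpleGraph.dist_comm]; exact hcross q hq' p hp
  · exact hself b hb p hp q hq'
end

section
/- Let X be a δ-hyperbolic graph, let 𝒴 be an M0-geometrically separated family of nonempty K-quasiconvex subsets of X, and let X̂ be the cone-off of X with respect to 𝒴. There is a constant C ≥ 1, depending only on δ, K and M0, such that for all vertices x, y of X and every T ≥ 0: if d_Y^π(x,y) ≤ T for every Y ∈ 𝒴, then d_X(x,y) ≤ (T + 2C)·d_{X̂}(x,y). -/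
/-!
The bound comes from the nearest-point projection onto a geodesic `α` of `X` from `x` to `y`.
For a vertex `z` let `idx z` be the arc-length parameter of a point of `α` nearest to `z`; it is `0`
at `x` and `d(x,y)` at `y`. It suffices that `idx` moves by at most `T + 2C` across every edge of
`X` and between any two points of a common `Y ∈ 𝒴`: summing along a geodesic of the cone-off then
gives the claim (`abs_idx_sub_le_of_walk`).

If `idx a` and `idx b` are far apart, slimness of the quadrilateral with corners `a`, `b` and
their projections forces both projections to be uniformly close to a geodesic from `a` to `b`
(`exists_near_of_proj`). When `a`, `b` are adjacent this bounds the gap. When `a, b ∈ Y`,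
quasiconvexity provides `u, u' ∈ Y` within distance `R` of the two projections `α(i)`, `α(j)`,
`i ≤ j`. Nearest points of `Y` to `x` and `y` are at distance at most `i + R` and
`d(x,y) - j + R` from `x` and `y`, and at distance at most `T` from each other, so the triangle
inequality along `x, π_Y(x), π_Y(y), y` gives `j - i ≤ T + 2R`.

Geodesics are handled through metric intervals: `m` lies on some geodesic from `u` to `v` exactly
when `d(u,m) + d(m,v) = d(u,v)`.
-/

open scoped ENNReal

universe u

/-- The metric interval between `u` and `v`: the vertices lying on some geodesic from `u` to `v`. -/
def geoInterval {V : Type*} (G : SimpleGraph V) (u v : V) : Set V :=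
  {m | G.dist u m + G.dist m v = G.dist u v}

lemma mem_geoInterval_of_mem_support {V : Type*} {G : SimpleGraph V} (hG : G.Connected) {u v m : V}
    (p : G.Walk u v) (hp : p.length = G.dist u v) (hm : m ∈ p.support) :
    m ∈ geoInterval G u v := by
  classical
  have h1 := SimpleGraph.dist_le (p.takeUntil m hm)
  have h2 := SimpleGraph.dist_le (p.dropUntil m hm)
  have h3 : (p.takeUntil m hm).length + (p.dropUntil m hm).length = p.length := by
    rw [← SimpleGraph.Walk.length_append, SimpleGraph.Walk.take_spec]
  have h4 := hG.dist_triangle (u := u) (v := m) (w := v)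
  simp only [geoInterval, Set.mem_ofPred_eq]
  omega

lemma exists_geodesic_through {V : Type*} {G : SimpleGraph V} (hG : G.Connected) {u v m : V}
    (hm : m ∈ geoInterval G u v) :
    ∃ p : G.Walk u v, p.length = G.dist u v ∧ m ∈ p.support := by
  obtain ⟨p, hp⟩ := hG.exists_walk_length_eq_dist u m
  obtain ⟨q, hq⟩ := hG.exists_walk_length_eq_dist m v
  refine ⟨p.append q, ?_, ?_⟩
  · simp only [geoInterval, Set.mem_ofPred_eq] at hm
    rw [SimpleGraph.Walk.length_append]
    omega
  · rw [SimpleGraph.Walk.mem_support_append_iff]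
    exact Or.inl p.end_mem_support

lemma slim_interval {V : Type*} {G : SimpleGraph V} {δ : ℝ} (hG : G.Connected)
    (hS : SlimTrianglesG G δ) {u v m : V} (z : V) (hm : m ∈ geoInterval G u v) :
    ∃ w, (w ∈ geoInterval G u z ∨ w ∈ geoInterval G z v) ∧ (G.dist m w : ℝ) ≤ δ := by
  obtain ⟨p, hp, hmp⟩ := exists_geodesic_through hG hm
  obtain ⟨q, hq⟩ := hG.exists_walk_length_eq_dist u z
  obtain ⟨r, hr⟩ := hG.exists_walk_length_eq_dist z v
  obtain ⟨w, hw, hd⟩ := hS p q r hp hq hr m hmp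
  exact ⟨w, hw.imp (mem_geoInterval_of_mem_support hG q hq)
    (mem_geoInterval_of_mem_support hG r hr), hd⟩

lemma real_dist_triangle {V : Type*} {G : SimpleGraph V} (hG : G.Connected) (u v w : V) :
    (G.dist u w : ℝ) ≤ G.dist u v + G.dist v w := by
  exact_mod_cast hG.dist_triangle

/-- Arc-length parametrization of a geodesic. -/
lemma exists_geodesic_param {V : Type*} {G : SimpleGraph V} (hG : G.Connected) (x y : V) :
    ∃ f : ℕ → V, f 0 = x ∧ f (G.dist x y) = y ∧
      ∀ i j, i ≤ j → j ≤ G.dist x y → G.dist (f i) (f j) = j - i := by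
  obtain ⟨p, hp⟩ := hG.exists_walk_length_eq_dist x y
  have hstep : ∀ i k, i + k ≤ p.length → G.dist (p.getVert i) (p.getVert (i + k)) ≤ k := by
    intro i k
    induction k with
    | zero => simp
    | succ k ih =>
      intro h
      have h1 := ih (by omega)
      have h2 : G.dist (p.getVert (i + k)) (p.getVert (i + k + 1)) = 1 :=
        SimpleGraph.dist_eq_one_iff_adj.mpr (p.adj_getVert_succ (by omega))
      have h3 := hG.dist_triangle (u := p.getVert i) (v := p.getVert (i + k))
        (w := p.getVert (i + k + 1))
      rw [← add_assoc]
      omega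
  refine ⟨p.getVert, p.getVert_zero, hp ▸ p.getVert_length, fun i j hij hj => ?_⟩
  have h1 := hstep 0 i (by omega)
  have h2 := hstep i (j - i) (by omega)
  have h3 := hstep j (p.length - j) (by omega)
  rw [show i + (j - i) = j by omega] at h2
  rw [show j + (p.length - j) = p.length by omega, p.getVert_length] at h3
  rw [zero_add, p.getVert_zero] at h1
  have h4 := hG.dist_triangle (u := x) (v := p.getVert i) (w := y)
  have h5 := hG.dist_triangle (u := p.getVert i) (v := p.getVert j) (w := y)
  omega

/-- If `p` is no farther from `a` than `m` is, then `m` can only be close to a geodesic from `p`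
to `a` by being close to `p`. -/
lemma dist_le_of_near_interval {V : Type*} {G : SimpleGraph V} (hG : G.Connected) {a p m w : V}
    {r : ℝ} (hmin : G.dist a p ≤ G.dist a m) (hw : w ∈ geoInterval G p a)
    (hd : (G.dist m w : ℝ) ≤ r) : (G.dist m p : ℝ) ≤ 2 * r := by
  have h1 := real_dist_triangle hG a w m
  have h2 := real_dist_triangle hG m w p
  have h3 : (G.dist p w : ℝ) + G.dist w a = G.dist p a := by exact_mod_cast hw
  have h4 : (G.dist a p : ℝ) ≤ G.dist a m := by exact_mod_cast hmin
  rw [G.dist_comm (u := a) (v := p)] at h4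
  rw [G.dist_comm (u := a) (v := w), G.dist_comm (u := w) (v := m)] at h1
  rw [G.dist_comm (u := w) (v := p)] at h2
  linarith

/-- A point `m` between the projections `p`, `q` of `a`, `b` and far from both of them is
`2δ`-close to a geodesic from `a` to `b`. -/
lemma exists_near_of_proj {V : Type*} {G : SimpleGraph V} {δ : ℝ} (hδ : 0 ≤ δ)
    (hG : G.Connected) (hS : SlimTrianglesG G δ) {a b p q m : V}
    (hm : m ∈ geoInterval G p q)
    (hpa : G.dist a p ≤ G.dist a m) (hqb : G.dist b q ≤ G.dist b m)
    (hmp : 4 * δ < G.dist m p) (hmq : 4 * δ < G.dist m q) :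
    ∃ w ∈ geoInterval G a b, (G.dist m w : ℝ) ≤ 2 * δ := by
  obtain ⟨w, hw | hw, hd⟩ := slim_interval hG hS a hm
  · have := dist_le_of_near_interval hG hpa hw hd
    linarith
  · obtain ⟨w', hw', hd'⟩ := slim_interval hG hS b hw
    have hd2 : (G.dist m w' : ℝ) ≤ 2 * δ := by
      have := real_dist_triangle hG m w w'
      linarith
    rcases hw' with hw' | hw'
    · exact ⟨w', hw', hd2⟩
    · have hsymm : w' ∈ geoInterval G q b := by
        simp only [geoInterval, Set.mem_ofPred_eq] at hw' ⊢
        rw [G.dist_comm (u := q) (v := w'), G.dist_comm (u := w') (v := b),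
          G.dist_comm (u := q) (v := b)]
        omega
      have := dist_le_of_near_interval hG hqb hsymm hd2
      linarith

lemma dist_le_of_gdiam_le {V : Type*} {G : SimpleGraph V} {S : Set V} {T : ℝ} (hT : 0 ≤ T)
    (h : gdiam G S ≤ ENNReal.ofReal T) {a b : V} (ha : a ∈ S) (hb : b ∈ S) :
    (G.dist a b : ℝ) ≤ T := by
  have h1 : (G.dist a b : ℝ≥0∞) ≤ gdiam G S :=
    le_iSup₂_of_le a ha (le_iSup₂_of_le b hb le_rfl)
  have h2 := h1.trans h
  rwa [← ENNReal.ofReal_natCast, ENNReal.ofReal_le_ofReal_iff hT] at h2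

lemma exists_mem_projSet {V : Type*} (G : SimpleGraph V) {Y : Set V} (hY : Y.Nonempty) (z : V) :
    ∃ u, u ∈ projSet G Y z := by
  obtain ⟨u, hu, hmin⟩ := exists_minimalFor_of_wellFoundedLT (· ∈ Y) (G.dist z) hY
  refine ⟨u, hu, fun v hv => ?_⟩
  rcases le_total (G.dist z u) (G.dist z v) with h | h
  · exact h
  · exact hmin hv h

/-- `i` is the parameter of a point of the geodesic `f`, of length `L`, nearest to `z`. -/
def IsNearestIdx {V : Type*} (G : SimpleGraph V) (f : ℕ → V) (L : ℕ) (z : V) (i : ℕ) : Prop :=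
  i ≤ L ∧ ∀ k ≤ L, G.dist z (f i) ≤ G.dist z (f k)

/-- Projections of `a` and `b` to a geodesic that are at least `2E > 8δ` apart are both
`(E + 2δ)`-close to geodesics from `a` to `b`. -/
lemma exists_near_endpoints {V : Type*} {G : SimpleGraph V} {δ : ℝ} (hδ : 0 ≤ δ)
    (hG : G.Connected) (hS : SlimTrianglesG G δ) {f : ℕ → V} {L E : ℕ} (hE : 4 * δ < E)
    (hf : ∀ i j, i ≤ j → j ≤ L → G.dist (f i) (f j) = j - i) {a b : V} {i j : ℕ}
    (hi : IsNearestIdx G f L a i) (hj : IsNearestIdx G f L b j) (hij : i + 2 * E ≤ j) :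
    (∃ w ∈ geoInterval G a b, (G.dist (f i) w : ℝ) ≤ E + 2 * δ) ∧
      ∃ w ∈ geoInterval G a b, (G.dist (f j) w : ℝ) ≤ E + 2 * δ := by
  have hjL := hj.1
  -- Both claims come from a point of the geodesic at distance `≥ E` from both projections.
  have key : ∀ k, i + E ≤ k → k + E ≤ j →
      ∃ w ∈ geoInterval G a b, (G.dist (f k) w : ℝ) ≤ 2 * δ := by
    intro k hk1 hk2
    have e1 := hf i k (by omega) (by omega)
    have e2 := hf k j (by omega) (by omega)
    have e3 := hf i j (by omega) (by omega)
    refine exists_near_of_proj hδ hG hS (p := f i) (q := f j) ?_ (hi.2 k (by omega))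
      (hj.2 k (by omega)) ?_ ?_
    · simp only [geoInterval, Set.mem_ofPred_eq]
      omega
    · rw [G.dist_comm, e1]
      exact hE.trans_le (by exact_mod_cast (by omega : E ≤ k - i))
    · rw [e2]
      exact hE.trans_le (by exact_mod_cast (by omega : E ≤ j - k))
  constructor
  · obtain ⟨w, hw, hd⟩ := key (i + E) le_rfl (by omega)
    refine ⟨w, hw, ?_⟩
    have e := hf i (i + E) (by omega) (by omega)
    rw [Nat.add_sub_cancel_left] at e
    have := real_dist_triangle hG (f i) (f (i + E)) w
    rw [e] at this
    linarith
  · obtain ⟨w, hw, hd⟩ := key (j - E) (by omega) (by omega)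
    refine ⟨w, hw, ?_⟩
    have e := hf (j - E) j (by omega) (by omega)
    rw [Nat.sub_sub_self (by omega)] at e
    have := real_dist_triangle hG (f j) (f (j - E)) w
    rw [G.dist_comm (u := f j) (v := f (j - E)), e] at this
    linarith

lemma idx_sub_le_of_adj {V : Type*} {G : SimpleGraph V} {δ : ℝ} (hδ : 0 ≤ δ)
    (hG : G.Connected) (hS : SlimTrianglesG G δ) {f : ℕ → V} {L E : ℕ} (hE : 4 * δ < E)
    (hf : ∀ i j, i ≤ j → j ≤ L → G.dist (f i) (f j) = j - i) {a b : V} {i j : ℕ}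
    (hi : IsNearestIdx G f L a i) (hj : IsNearestIdx G f L b j) (hab : G.Adj a b) :
    (j : ℝ) - i ≤ 2 * (E + 2 * δ + 1) := by
  by_cases hij : i + 2 * E ≤ j
  · obtain ⟨⟨w, hw, hd⟩, w', hw', hd'⟩ := exists_near_endpoints hδ hG hS hE hf hi hj hij
    have hone : G.dist a b = 1 := SimpleGraph.dist_eq_one_iff_adj.mpr hab
    simp only [geoInterval, Set.mem_ofPred_eq] at hw hw'
    have h1 : (G.dist a w : ℝ) ≤ 1 := by exact_mod_cast (by omega : G.dist a w ≤ 1)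
    have h2 : (G.dist a w' : ℝ) ≤ 1 := by exact_mod_cast (by omega : G.dist a w' ≤ 1)
    have e : (G.dist (f i) (f j) : ℝ) = j - i := by
      rw [hf i j (by omega) hj.1, Nat.cast_sub (by omega)]
    have t1 := real_dist_triangle hG (f i) w (f j)
    have t2 := real_dist_triangle hG w a (f j)
    have t3 := real_dist_triangle hG a w' (f j)
    rw [G.dist_comm (u := w) (v := a)] at t2
    rw [G.dist_comm (u := w')] at t3
    linarith
  · have : (j : ℝ) ≤ i + 2 * E := by exact_mod_cast (by omega : j ≤ i + 2 * E)
    linarith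

lemma idx_sub_le_of_mem {V : Type*} {G : SimpleGraph V} {δ K T : ℝ} (hδ : 0 ≤ δ) (hK : 0 ≤ K)
    (hT : 0 ≤ T) (hG : G.Connected) (hS : SlimTrianglesG G δ) {f : ℕ → V} {L E : ℕ}
    (hE : 4 * δ < E) (hL : G.dist (f 0) (f L) = L)
    (hf : ∀ i j, i ≤ j → j ≤ L → G.dist (f i) (f j) = j - i) {Y : Set V}
    (hY : QuasiconvexIn G K Y)
    (hproj : gdiam G (projSet G Y (f 0) ∪ projSet G Y (f L)) ≤ ENNReal.ofReal T)
    {a b : V} (ha : a ∈ Y) (hb : b ∈ Y) {i j : ℕ}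
    (hi : IsNearestIdx G f L a i) (hj : IsNearestIdx G f L b j) :
    (j : ℝ) - i ≤ T + 2 * (E + 2 * δ + K) := by
  by_cases hij : i + 2 * E ≤ j
  · have near : ∀ k, (∃ w ∈ geoInterval G a b, (G.dist (f k) w : ℝ) ≤ E + 2 * δ) →
        ∃ u ∈ Y, (G.dist (f k) u : ℝ) ≤ E + 2 * δ + K := by
      rintro k ⟨w, hw, hd⟩
      obtain ⟨p, hp, hwp⟩ := exists_geodesic_through hG hw
      obtain ⟨u, hu, hwu⟩ := hY ha hb p hp w hwp
      exact ⟨u, hu, by linarith [real_dist_triangle hG (f k) w u]⟩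
    have hends := exists_near_endpoints hδ hG hS hE hf hi hj hij
    obtain ⟨u, hu, hdu⟩ := near i hends.1
    obtain ⟨u', hu', hdu'⟩ := near j hends.2
    obtain ⟨px, hpx⟩ := exists_mem_projSet G ⟨a, ha⟩ (f 0)
    obtain ⟨py, hpy⟩ := exists_mem_projSet G ⟨a, ha⟩ (f L)
    have hxy := dist_le_of_gdiam_le hT hproj (Or.inl hpx) (Or.inr hpy)
    have hx : (G.dist (f 0) px : ℝ) ≤ G.dist (f 0) u := by exact_mod_cast hpx.2 u hu
    have hy : (G.dist (f L) py : ℝ) ≤ G.dist (f L) u' := by exact_mod_cast hpy.2 u' hu'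
    have e1 : (G.dist (f 0) (f i) : ℝ) = i := by
      rw [hf 0 i (by omega) hi.1, Nat.sub_zero]
    have e2 : (G.dist (f L) (f j) : ℝ) = L - j := by
      rw [G.dist_comm, hf j L hj.1 le_rfl, Nat.cast_sub hj.1]
    have e3 : (G.dist (f 0) (f L) : ℝ) = L := by exact_mod_cast hL
    have t1 := real_dist_triangle hG (f 0) (f i) u
    have t2 := real_dist_triangle hG (f L) (f j) u'
    have t3 := real_dist_triangle hG (f 0) px (f L)
    have t4 := real_dist_triangle hG px py (f L)
    rw [G.dist_comm (u := py)] at t4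
    linarith
  · have : (j : ℝ) ≤ i + 2 * E := by exact_mod_cast (by omega : j ≤ i + 2 * E)
    linarith

lemma coneOff_adj_inl_inl {V : Type*} {G : SimpleGraph V} {𝒴 : Set (Set V)} {a b : V} :
    (coneOff G 𝒴).Adj (Sum.inl a) (Sum.inl b) ↔ G.Adj a b := by
  simp only [coneOff, SimpleGraph.fromRel_adj, ne_eq, Sum.inl.injEq]
  exact ⟨fun h => h.2.elim id fun h => h.symm, fun h => ⟨h.ne, Or.inl h⟩⟩

/-- A function on the vertices of `X` that varies by at most `D` across edges and on each `Y ∈ 𝒴`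
is `D`-Lipschitz for the cone-off metric. From a cone vertex `v_Y` the induction bounds the
variation from every point of `Y`, charging one extra step. -/
lemma abs_idx_sub_le_of_walk {V : Type*} {G : SimpleGraph V} {𝒴 : Set (Set V)} {g : V → ℝ} {D : ℝ}
    (hD : 0 ≤ D) (hadj : ∀ a b, G.Adj a b → |g a - g b| ≤ D)
    (hmem : ∀ Y ∈ 𝒴, ∀ a ∈ Y, ∀ b ∈ Y, |g a - g b| ≤ D) {u v : V ⊕ ↥𝒴}
    (p : (coneOff G 𝒴).Walk u v) {y : V} (hv : v = Sum.inl y) :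
    (∀ z, u = Sum.inl z → |g z - g y| ≤ D * p.length) ∧
      ∀ Y : ↥𝒴, u = Sum.inr Y → ∀ z ∈ (Y : Set V), |g z - g y| ≤ D * (p.length + 1) := by
  induction p with
  | nil =>
    subst hv
    refine ⟨fun z hz => ?_, fun Y hY => by simp at hY⟩
    rw [Sum.inl.injEq] at hz
    simp [hz]
  | @cons u u' v h p ih =>
    obtain ⟨ih1, ih2⟩ := ih hv
    refine ⟨fun z hz => ?_, fun Y hY z hz => ?_⟩
    · subst hz
      rw [SimpleGraph.Walk.length_cons, Nat.cast_add, Nat.cast_one]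
      rcases u' with z' | Y
      · have h1 := hadj z z' (coneOff_adj_inl_inl.mp h)
        have h2 := ih1 z' rfl
        have h3 := abs_sub_le (g z) (g z') (g y)
        linarith
      · have hzY : z ∈ (Y : Set V) := by
          simpa [coneOff, SimpleGraph.fromRel_adj] using h
        exact ih2 Y rfl z hzY
    · subst hY
      rw [SimpleGraph.Walk.length_cons, Nat.cast_add, Nat.cast_one]
      rcases u' with z' | Y'
      · have hzY : z' ∈ (Y : Set V) := by
          simpa [coneOff, SimpleGraph.fromRel_adj] using h
        have h1 := hmem Y Y.2 z hz z' hzY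
        have h2 := ih1 z' rfl
        have h3 := abs_sub_le (g z) (g z') (g y)
        linarith
      · simp [coneOff, SimpleGraph.fromRel_adj] at h

lemma exists_isNearestIdx {V : Type*} (G : SimpleGraph V) (f : ℕ → V) (L : ℕ) (z : V) :
    ∃ i, IsNearestIdx G f L z i := by
  obtain ⟨i, hi, hmin⟩ := Finset.exists_min_image (Finset.range (L + 1))
    (fun k => G.dist z (f k)) ⟨0, by simp⟩
  exact ⟨i, by simpa [Nat.lt_succ_iff] using hi, fun k hk => hmin k (by simp; omega)⟩

/-- Points of the geodesic project to themselves. -/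
lemma isNearestIdx_self {V : Type*} {G : SimpleGraph V} {f : ℕ → V} {L : ℕ}
    (hf : ∀ i j, i ≤ j → j ≤ L → G.dist (f i) (f j) = j - i) {k i : ℕ} (hk : k ≤ L)
    (hi : IsNearestIdx G f L (f k) i) : i = k := by
  have h0 : G.dist (f k) (f i) = 0 := by
    have := hi.2 k hk
    rw [SimpleGraph.dist_self] at this
    omega
  rcases le_total i k with h | h
  · have := hf i k h hk
    rw [G.dist_comm] at this
    omega
  · have := hf k i h hi.1
    omega

/-- Comparison of the metrics of `G` and of its cone-off: for an `M0`-geometrically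
separated family `𝒴` of nonempty `K`-quasiconvex subsets of a `δ`-hyperbolic graph there
is `C ≥ 1`, depending only on `δ, K, M0`, such that whenever all projection distances
`d_Y^π(x,y)` (for `Y ∈ 𝒴`) are at most `T`, one has
`d_X(x,y) ≤ (T + 2C) · d_{X̂}(x,y)`. -/
theorem dist_le_of_small_projections (δ K M0 : ℝ)
    (hδ : 0 ≤ δ) (hK : 0 ≤ K) (hM0 : 0 ≤ M0) :
    ∃ C : ℝ, 1 ≤ C ∧
      ∀ (V : Type u) (G : SimpleGraph V), G.Connected → SlimTrianglesG G δ →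
        ∀ 𝒴 : Set (Set V),
          (∀ Y ∈ 𝒴, Y.Nonempty) → (∀ Y ∈ 𝒴, QuasiconvexIn G K Y) →
          (∀ Y ∈ 𝒴, ∀ Y' ∈ 𝒴, Y ≠ Y' →
            gdiam G (Y ∩ nbhd G (2 * K + 2 * δ) Y') ≤ ENNReal.ofReal M0) →
          ∀ x y : V, ∀ T : ℝ, 0 ≤ T →
            (∀ Y ∈ 𝒴,
              gdiam G (projSet G Y x ∪ projSet G Y y) ≤ ENNReal.ofReal T) →
            (G.dist x y : ℝ) ≤
              (T + 2 * C) * ((coneOff G 𝒴).dist (Sum.inl x) (Sum.inl y) : ℝ) := by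
  obtain ⟨E, hE⟩ := exists_nat_gt (4 * δ)
  have hE0 : (0 : ℝ) ≤ E := Nat.cast_nonneg E
  refine ⟨E + 2 * δ + K + 1, by linarith, ?_⟩
  intro V G hG hS 𝒴 _ hqc _ x y T hT hproj
  obtain ⟨f, hf0, hfL, hf⟩ := exists_geodesic_param hG x y
  choose idx hidx using exists_isNearestIdx G f (G.dist x y)
  have hx : idx x = 0 := isNearestIdx_self hf (Nat.zero_le _) (by rw [hf0]; exact hidx x)
  have hy : idx y = G.dist x y := isNearestIdx_self hf le_rfl (by rw [hfL]; exact hidx y)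
  have hadj : ∀ a b, G.Adj a b →
      |(idx a : ℝ) - idx b| ≤ T + 2 * (E + 2 * δ + K + 1) := by
    intro a b hab
    have h1 := idx_sub_le_of_adj hδ hG hS hE hf (hidx a) (hidx b) hab
    have h2 := idx_sub_le_of_adj hδ hG hS hE hf (hidx b) (hidx a) hab.symm
    rw [abs_le]
    constructor <;> linarith
  have hmem : ∀ Y ∈ 𝒴, ∀ a ∈ Y, ∀ b ∈ Y,
      |(idx a : ℝ) - idx b| ≤ T + 2 * (E + 2 * δ + K + 1) := by
    intro Y hY a ha b hb
    have hL : G.dist (f 0) (f (G.dist x y)) = G.dist x y := by rw [hf0, hfL]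
    have hp : gdiam G (projSet G Y (f 0) ∪ projSet G Y (f (G.dist x y))) ≤ ENNReal.ofReal T := by
      rw [hf0, hfL]
      exact hproj Y hY
    have h1 := idx_sub_le_of_mem hδ hK hT hG hS hE hL hf (hqc Y hY) hp ha hb (hidx a) (hidx b)
    have h2 := idx_sub_le_of_mem hδ hK hT hG hS hE hL hf (hqc Y hY) hp hb ha (hidx b) (hidx a)
    rw [abs_le]
    constructor <;> linarith
  -- The cone-off distance is attained by a walk because `X` is a connected subgraph.
  let φ : G →g coneOff G 𝒴 := ⟨Sum.inl, fun h => coneOff_adj_inl_inl.mpr h⟩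
  have hreach : (coneOff G 𝒴).Reachable (Sum.inl x) (Sum.inl y) :=
    (hG.preconnected x y).map φ
  obtain ⟨p, hp⟩ := hreach.exists_walk_length_eq_dist
  have hfin := (abs_idx_sub_le_of_walk (g := fun z => (idx z : ℝ)) (by linarith) hadj hmem p
    rfl).1 x rfl
  rw [hp] at hfin
  simp only [hx, hy, Nat.cast_zero, zero_sub, abs_neg, Nat.abs_cast] at hfin
  exact hfin
end
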